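/- For every constant c ≥ 1 there is a constant C such that for all integers n ≥ 2 and f ≥ 2·(log₂ n)² there exists a decoder function D (depending only on n, f, and c) with the following property: for every finite simple graph G = (V,E) on n vertices there exists a finitely supported probability distribution over pairs of labeling functions (L_V : V → {0,1}^{b_V}, L_E : E → {0,1}^{b_E}) with b_V ≤ C·log₂ n and b_E ≤ C·(log₂ n)²·log₂(f/(log₂ n)²), such that for every fixed s,t ∈ V and F ⊆ E with |F| ≤ f, with probability at least 1 − n^{−c} over the random labeling, D applied to (L_V(s), L_V(t), {L_E(e) : e ∈ F}) outputs true if and only if s and t lie in the same connected component of G − F. -/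

import Mathlib

open scoped Classical

set_option linter.unusedSectionVars false

namespace FT

noncomputable def Ex {Ω : Type*} [Fintype Ω] (f : Ω → ℝ) : ℝ := (∑ ω, f ω) / Fintype.card Ω

noncomputable def Pr {Ω : Type*} [Fintype Ω] (p : Ω → Prop) : ℝ := Ex (fun ω => if p ω then 1 else 0)

section basic
variable {Ω : Type*} [Fintype Ω]

lemma Ex_mono {f g : Ω → ℝ} (h : ∀ ω, f ω ≤ g ω) : Ex f ≤ Ex g := by
  unfold Ex
  exact div_le_div_of_nonneg_right (Finset.sum_le_sum fun i _ => h i) (by positivity)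

lemma Ex_add (f g : Ω → ℝ) : Ex (fun ω => f ω + g ω) = Ex f + Ex g := by
  unfold Ex; rw [Finset.sum_add_distrib, add_div]

lemma Ex_smul (a : ℝ) (f : Ω → ℝ) : Ex (fun ω => a * f ω) = a * Ex f := by
  unfold Ex; rw [← Finset.mul_sum, mul_div_assoc]

lemma Ex_const [Nonempty Ω] (a : ℝ) : Ex (fun _ : Ω => a) = a := by
  unfold Ex; simp

lemma Ex_sum {ι : Type*} (s : Finset ι) (f : ι → Ω → ℝ) :
    Ex (fun ω => ∑ i ∈ s, f i ω) = ∑ i ∈ s, Ex (f i) := by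
  unfold Ex; rw [Finset.sum_comm, Finset.sum_div]

lemma Pr_mono {p q : Ω → Prop} (h : ∀ ω, p ω → q ω) : Pr p ≤ Pr q := by
  apply Ex_mono; intro ω
  by_cases hp : p ω
  · simp [hp, h ω hp]
  · simp only [hp, if_false]; split_ifs <;> norm_num

lemma Pr_nonneg (p : Ω → Prop) : 0 ≤ Pr p := by
  unfold Pr Ex
  apply div_nonneg
  · apply Finset.sum_nonneg; intro i _; split_ifs <;> norm_num
  · positivity

lemma Pr_or (p q : Ω → Prop) : Pr (fun ω => p ω ∨ q ω) ≤ Pr p + Pr q := by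
  unfold Pr; rw [← Ex_add]; apply Ex_mono; intro ω
  by_cases hp : p ω <;> by_cases hq : q ω <;> simp [hp, hq]

lemma Pr_not [Nonempty Ω] (p : Ω → Prop) : Pr (fun ω => ¬ p ω) = 1 - Pr p := by
  have : Pr (fun ω => ¬ p ω) + Pr p = 1 := by
    unfold Pr; rw [← Ex_add]
    refine Eq.trans ?_ (Ex_const (Ω := Ω) 1); congr 1; ext ω
    by_cases hp : p ω <;> simp [hp]
  linarith

lemma Pr_exists_le {ι : Type*} (s : Finset ι) (p : ι → Ω → Prop) (ε : ℝ) (h : ∀ i ∈ s, Pr (p i) ≤ ε) :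
    Pr (fun ω => ∃ i ∈ s, p i ω) ≤ s.card * ε := by
  calc Pr (fun ω => ∃ i ∈ s, p i ω) ≤ Ex (fun ω => ∑ i ∈ s, if p i ω then (1:ℝ) else 0) := by
        apply Ex_mono; intro ω
        have hnn : ∀ i ∈ s, (0:ℝ) ≤ if p i ω then (1:ℝ) else 0 := by
          intro i _; split_ifs <;> norm_num
        split_ifs with hh
        · obtain ⟨i, hi, hp⟩ := hh
          have := Finset.single_le_sum hnn hi
          simpa [hp] using this
        · exact Finset.sum_nonneg hnn
    _ = ∑ i ∈ s, Pr (p i) := Ex_sum _ _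
    _ ≤ ∑ i ∈ s, ε := Finset.sum_le_sum h
    _ = s.card * ε := by simp

lemma Pr_prod_le {Ω' : Type*} [Fintype Ω'] [Nonempty Ω] (p : Ω × Ω' → Prop) (ε : ℝ)
    (h : ∀ a, Pr (fun b => p (a, b)) ≤ ε) : Pr p ≤ ε := by
  have : Pr p = Ex (fun a => Pr (fun b => p (a, b))) := by
    unfold Pr Ex
    rw [Fintype.sum_prod_type, Fintype.card_prod, ← Finset.sum_div, div_div]
    push_cast; rw [mul_comm]
  rw [this]
  calc _ ≤ Ex (fun _ : Ω => ε) := Ex_mono h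
    _ = ε := Ex_const _

lemma Pr_equiv {Ω' : Type*} [Fintype Ω'] (φ : Ω ≃ Ω') (p : Ω' → Prop) :
    Pr (fun ω => p (φ ω)) = Pr p := by
  unfold Pr Ex
  rw [Fintype.card_congr φ]; congr 1
  exact Equiv.sum_comp φ (fun ω => if p ω then (1:ℝ) else 0)

end basic

section indep
variable {E X : Type*} [Fintype E] [DecidableEq E] [Fintype X] [Nonempty X]

def Dep {β : Type*} (f : (E → X) → β) (D : Finset E) : Prop :=
  ∀ x y, (∀ i ∈ D, x i = y i) → f x = f y

lemma Ex_mul_of_dep (f g : (E → X) → ℝ) (D D' : Finset E) (hD : Disjoint D D') (hf : Dep f D) (hg : Dep g D') :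
    Ex (fun ω => f ω * g ω) = Ex f * Ex g := by
  let φ : ((E → X) × (E → X)) ≃ ((E → X) × (E → X)) :=
    { toFun := fun p => (D.piecewise p.1 p.2, D.piecewise p.2 p.1)
      invFun := fun p => (D.piecewise p.1 p.2, D.piecewise p.2 p.1)
      left_inv := by
        rintro ⟨x, y⟩; ext i <;> by_cases h : i ∈ D <;> simp [Finset.piecewise, h]
      right_inv := by
        rintro ⟨x, y⟩; ext i <;> by_cases h : i ∈ D <;> simp [Finset.piecewise, h] }
  have key : (∑ x, f x) * (∑ y, g y) = Fintype.card (E → X) * ∑ x, f x * g x := by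
    rw [Finset.sum_mul_sum, ← Fintype.sum_prod_type']
    have h1 : ∀ p : (E → X) × (E → X), f p.1 * g p.2 = f (φ p).1 * g (φ p).1 := by
      rintro ⟨x, y⟩
      congr 1
      · apply hf; intro i hi; simp [φ, Finset.piecewise, hi]
      · apply hg; intro i hi
        have : i ∉ D := fun h => (Finset.disjoint_left.mp hD h hi)
        simp [φ, Finset.piecewise, this]
    rw [Finset.sum_congr rfl (fun p _ => h1 p), Equiv.sum_comp φ (fun p => f p.1 * g p.1),
      Fintype.sum_prod_type]
    simp [Finset.mul_sum]
  have hc : (Fintype.card (E → X) : ℝ) ≠ 0 := by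
    have := Fintype.card_pos (α := E → X); positivity
  unfold Ex
  rw [div_mul_div_comm, key, mul_div_mul_left _ _ hc]

lemma Ex_prod_of_dep {α : Type*} (Q : Finset α) (g : α → (E → X) → ℝ) (W : α → Finset E)
    (hW : ∀ A ∈ Q, ∀ B ∈ Q, A ≠ B → Disjoint (W A) (W B)) (hg : ∀ A ∈ Q, Dep (g A) (W A)) :
    Ex (fun ω => ∏ A ∈ Q, g A ω) = ∏ A ∈ Q, Ex (g A) := by
  induction Q using Finset.induction_on with
  | empty => simp [Ex_const]
  | insert a s ha ih =>
    rw [Finset.prod_insert ha, ← ih (fun A hA B hB => hW A (Finset.mem_insert_of_mem hA) B (Finset.mem_insert_of_mem hB))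
      (fun A hA => hg A (Finset.mem_insert_of_mem hA))]
    rw [← Ex_mul_of_dep (g a) _ (W a) (s.biUnion W)]
    · congr 1; ext ω; rw [Finset.prod_insert ha]
    · rw [Finset.disjoint_biUnion_right]
      intro B hB
      exact hW a (Finset.mem_insert_self _ _) B (Finset.mem_insert_of_mem hB) (fun h => ha (h ▸ hB))
    · exact hg a (Finset.mem_insert_self _ _)
    · intro x y hxy
      apply Finset.prod_congr rfl
      intro B hB
      exact hg B (Finset.mem_insert_of_mem hB) x y (fun i hi => hxy i (Finset.mem_biUnion.mpr ⟨B, hB, hi⟩))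

/-- Chernoff-type bound. -/
lemma chernoff {α : Type*} (Q : Finset α) (p : α → (E → X) → Prop) (W : α → Finset E)
    (hW : ∀ A ∈ Q, ∀ B ∈ Q, A ≠ B → Disjoint (W A) (W B)) (hp : ∀ A ∈ Q, Dep (p A) (W A))
    (β l θ : ℝ) (hl : 1 ≤ l) (hβ : ∀ A ∈ Q, Pr (p A) ≤ β) :
    Pr (fun ω => θ ≤ ((Q.filter (fun A => p A ω)).card : ℝ)) ≤ l ^ (-θ) * (1 + (l - 1) * β) ^ Q.card := by
  have hl0 : 0 < l := by linarith
  calc _ ≤ Ex (fun ω => l ^ (-θ) * ∏ A ∈ Q, (1 + (l - 1) * if p A ω then (1:ℝ) else 0)) := by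
        apply Ex_mono; intro ω
        have h1 : ∏ A ∈ Q, (1 + (l - 1) * if p A ω then (1:ℝ) else 0) = l ^ ((Q.filter (fun A => p A ω)).card : ℝ) := by
          rw [Real.rpow_natCast, ← Finset.prod_const, Finset.prod_filter]
          apply Finset.prod_congr rfl; intro A _; split_ifs <;> ring
        rw [h1, ← Real.rpow_add hl0]
        split_ifs with h
        · apply Real.one_le_rpow hl; linarith
        · positivity
    _ = l ^ (-θ) * ∏ A ∈ Q, Ex (fun ω => 1 + (l - 1) * if p A ω then (1:ℝ) else 0) := by
        rw [Ex_smul, Ex_prod_of_dep Q _ W hW]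
        intro A hA x y hxy
        simp only [hp A hA x y hxy]
    _ ≤ l ^ (-θ) * (1 + (l - 1) * β) ^ Q.card := by
        apply mul_le_mul_of_nonneg_left _ (by positivity)
        rw [← Finset.prod_const]
        have h2 : ∀ A, Ex (fun ω => 1 + (l - 1) * if p A ω then (1:ℝ) else 0) = 1 + (l-1) * Pr (p A) := by
          intro A; rw [Ex_add, Ex_const, Ex_smul]; rfl
        apply Finset.prod_le_prod
        · intro A _; rw [h2]
          have := Pr_nonneg (p A)
          have := mul_nonneg (sub_nonneg.mpr hl) this
          linarith
        · intro A hA; rw [h2]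
          have := mul_le_mul_of_nonneg_left (hβ A hA) (sub_nonneg.mpr hl)
          linarith

/-- coordinatewise resampling -/
lemma Pr_update_le (i : E) (p : (E → X) → Prop) (ε : ℝ)
    (h : ∀ x : E → X, Pr (fun y => p (Function.update x i y)) ≤ ε) : Pr p ≤ ε := by
  have key : (Fintype.card X : ℝ) * ∑ x : E → X, (if p x then (1:ℝ) else 0)
      = ∑ x : E → X, ∑ y : X, (if p (Function.update x i y) then (1:ℝ) else 0) := by
    let φ : ((E → X) × X) ≃ ((E → X) × X) :=
      { toFun := fun q => (Function.update q.1 i q.2, q.1 i)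
        invFun := fun q => (Function.update q.1 i q.2, q.1 i)
        left_inv := by rintro ⟨x, y⟩; simp
        right_inv := by rintro ⟨x, y⟩; simp }
    rw [← Fintype.sum_prod_type' (f := fun x y => (if p (Function.update x i y) then (1:ℝ) else 0))]
    have := Equiv.sum_comp φ (fun q => if p q.1 then (1:ℝ) else 0)
    simp only [φ, Equiv.coe_fn_mk] at this
    rw [this, Fintype.sum_prod_type, Finset.mul_sum]
    apply Finset.sum_congr rfl; intro x _
    change _ = ∑ _y : X, (if p x then (1:ℝ) else 0)
    rw [Finset.sum_const, nsmul_eq_mul, Finset.card_univ]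
  have hX : (0:ℝ) < Fintype.card X := by
    have := Fintype.card_pos (α := X); positivity
  have : Pr p = Ex (fun x : E → X => Pr (fun y => p (Function.update x i y))) := by
    unfold Pr Ex
    rw [← Finset.sum_div, ← key]; field_simp
  rw [this]
  calc _ ≤ Ex (fun _ : E → X => ε) := Ex_mono h
    _ = ε := Ex_const _

end indep
end FT

namespace FT

lemma coloring {α : Type*} (t : ℕ) (ht : 0 < t) (w : α → α → ℝ) (hw : ∀ a, w a a = 0) (s : Finset α) :
    ∃ χ : α → Fin t, ∑ A ∈ s, ∑ B ∈ s, (if χ A = χ B then w A B else 0) ≤ (1 / t) * ∑ A ∈ s, ∑ B ∈ s, w A B := by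
  have : NeZero t := ⟨ht.ne'⟩
  have ht' : (0:ℝ) < t := by exact_mod_cast ht
  induction s using Finset.induction_on with
  | empty => exact ⟨fun _ => 0, by simp⟩
  | insert a s ha ih =>
    obtain ⟨χ, hχ⟩ := ih
    obtain ⟨c, hc⟩ : ∃ c : Fin t, ∑ B ∈ s, (if c = χ B then (w a B + w B a) else 0) ≤
        (1 / t) * ∑ B ∈ s, (w a B + w B a) := by
      by_contra hcon
      push Not at hcon
      have h1 : ∑ c : Fin t, (1 / (t:ℝ)) * ∑ B ∈ s, (w a B + w B a) <
          ∑ c : Fin t, ∑ B ∈ s, (if c = χ B then (w a B + w B a) else 0) :=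
        Finset.sum_lt_sum_of_nonempty ⟨0, Finset.mem_univ _⟩ (fun c _ => hcon c)
      rw [Finset.sum_comm] at h1
      simp only [Finset.sum_ite_eq', Finset.mem_univ, if_true, Finset.sum_const, Finset.card_univ, Fintype.card_fin,
        nsmul_eq_mul] at h1
      rw [← mul_assoc, mul_one_div_cancel ht'.ne', one_mul] at h1
      exact lt_irrefl _ h1
    refine ⟨Function.update χ a c, ?_⟩
    have hne : ∀ B ∈ s, Function.update χ a c B = χ B := by
      intro B hB; rw [Function.update_of_ne]; rintro rfl; exact ha hB
    have e1 : ∑ A ∈ insert a s, ∑ B ∈ insert a s, (if Function.update χ a c A = Function.update χ a c B then w A B else 0)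
        = ∑ A ∈ s, ∑ B ∈ s, (if χ A = χ B then w A B else 0) +
          ∑ B ∈ s, (if c = χ B then (w a B + w B a) else 0) := by
      rw [Finset.sum_insert ha, Finset.sum_insert ha]
      simp only [if_true, hw, zero_add]
      have h3 : ∀ A ∈ s, ∑ B ∈ insert a s, (if Function.update χ a c A = Function.update χ a c B then w A B else 0)
          = (if c = χ A then w A a else 0) + ∑ B ∈ s, (if χ A = χ B then w A B else 0) := by
        intro A hA
        rw [Finset.sum_insert ha, hne A hA]
        congr 1
        · simp [eq_comm]
        · apply Finset.sum_congr rfl; intro B hB; rw [hne B hB]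
      rw [Finset.sum_congr rfl h3, Finset.sum_add_distrib]
      have h4 : ∑ B ∈ s, (if Function.update χ a c a = Function.update χ a c B then w a B else 0)
          = ∑ B ∈ s, (if c = χ B then w a B else 0) := by
        apply Finset.sum_congr rfl; intro B hB; rw [hne B hB]; simp
      rw [h4]
      have h5 : ∑ B ∈ s, (if c = χ B then (w a B + w B a) else 0) =
        ∑ B ∈ s, (if c = χ B then w a B else 0) + ∑ B ∈ s, (if c = χ B then w B a else 0) := by
        rw [← Finset.sum_add_distrib]; apply Finset.sum_congr rfl; intro B hB; split_ifs <;> simp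
      rw [h5]; ring
    have e2 : ∑ A ∈ insert a s, ∑ B ∈ insert a s, w A B = ∑ A ∈ s, ∑ B ∈ s, w A B + ∑ B ∈ s, (w a B + w B a) := by
      rw [Finset.sum_insert ha, Finset.sum_insert ha, hw, Finset.sum_add_distrib]
      have h3 : ∀ A ∈ s, ∑ B ∈ insert a s, w A B = w A a + ∑ B ∈ s, w A B := by
        intro A hA; rw [Finset.sum_insert ha]
      rw [Finset.sum_congr rfl h3, Finset.sum_add_distrib]; ring
    rw [e1, e2, mul_add]
    exact add_le_add hχ hc

lemma exists_Q {α E : Type*} [DecidableEq E] (t : ℕ) (ht : 0 < t) (D : α → Finset E) (s : Finset α)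
    (hne : ∀ A ∈ s, (D A).Nonempty)
    (h2 : ∀ e, (s.filter (fun A => e ∈ D A)).card ≤ 2) :
    ∃ Q ⊆ s, (s.card : ℝ) ≤ 2 * t * Q.card ∧
      ∀ A ∈ Q, (t : ℝ) * ∑ B ∈ Q, (if A = B then 0 else ((D A ∩ D B).card : ℝ)) ≤ 2 * (D A).card := by
  have ht' : (0:ℝ) < t := by exact_mod_cast ht
  set w : α → α → ℝ := fun A B => if A = B then 0 else ((D A ∩ D B).card : ℝ) / (D A).card with hwdef
  have hw0 : ∀ A B, 0 ≤ w A B := by intro A B; simp only [hwdef]; split_ifs <;> positivity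
  obtain ⟨χ, hχ⟩ := coloring t ht w (by simp [hwdef]) s
  have htot : ∀ A ∈ s, ∑ B ∈ s, w A B ≤ 1 := by
    intro A hA
    have hpos : (0:ℝ) < (D A).card := by exact_mod_cast (hne A hA).card_pos
    have h3 : ∑ B ∈ s, w A B = (∑ B ∈ s.erase A, ((D A ∩ D B).card : ℝ)) / (D A).card := by
      rw [Finset.sum_div, ← Finset.add_sum_erase s _ hA]
      simp only [hwdef, if_true, zero_add]
      apply Finset.sum_congr rfl; intro B hB
      rw [if_neg (Finset.ne_of_mem_erase hB).symm]
    rw [h3, div_le_one hpos]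
    have h4 : ∑ B ∈ s.erase A, (D A ∩ D B).card ≤ (D A).card := by
      have : ∀ B, (D A ∩ D B).card = ∑ e ∈ D A, if e ∈ D B then 1 else 0 := by
        intro B; rw [Finset.sum_ite_mem]; simp
      simp only [this]
      rw [Finset.sum_comm, Finset.card_eq_sum_ones]
      apply Finset.sum_le_sum
      intro e he
      rw [← Finset.card_filter]
      have h5 : (s.filter (fun B => e ∈ D B)) = insert A ((s.erase A).filter (fun B => e ∈ D B)) := by
        ext B; simp only [Finset.mem_filter, Finset.mem_insert, Finset.mem_erase]
        by_cases hBA : B = A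
        · subst hBA; simp [hA, he]
        · simp [hBA]
      have := h2 e
      rw [h5, Finset.card_insert_of_notMem (by simp)] at this
      omega
    exact_mod_cast h4
  set within : α → ℝ := fun A => ∑ B ∈ s, (if χ A = χ B then w A B else 0) with hwithin
  have hwi0 : ∀ A, 0 ≤ within A := by
    intro A; apply Finset.sum_nonneg; intro B _; split_ifs; exacts [hw0 _ _, le_rfl]
  have hsum : ∑ A ∈ s, within A ≤ s.card / t := by
    refine hχ.trans ?_
    have : ∑ A ∈ s, ∑ B ∈ s, w A B ≤ s.card := by
      calc _ ≤ ∑ A ∈ s, (1:ℝ) := Finset.sum_le_sum htot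
        _ = _ := by simp
    rw [one_div, inv_mul_eq_div]
    exact div_le_div_of_nonneg_right this ht'.le
  set good := s.filter (fun A => within A ≤ 2 / t) with hgood
  have hgc : (s.card : ℝ) ≤ 2 * good.card := by
    set bad := s.filter (fun A => ¬ within A ≤ 2 / t) with hbad
    have hcard : (s.card : ℝ) = good.card + bad.card := by
      exact_mod_cast (Finset.card_filter_add_card_filter_not (s := s) (fun A => within A ≤ 2 / t)).symm
    have hb : (bad.card : ℝ) * (2 / t) ≤ s.card / t := by
      calc (bad.card : ℝ) * (2 / t) = ∑ A ∈ bad, (2 / t : ℝ) := by simp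
        _ ≤ ∑ A ∈ bad, within A := Finset.sum_le_sum (fun A hA => by
            have := (Finset.mem_filter.mp hA).2; exact (not_le.mp this).le)
        _ ≤ ∑ A ∈ s, within A := Finset.sum_le_sum_of_subset_of_nonneg (Finset.filter_subset _ _) (fun _ _ _ => hwi0 _)
        _ ≤ _ := hsum
    rw [mul_div_assoc', div_le_div_iff_of_pos_right ht'] at hb
    linarith
  obtain ⟨c, hc⟩ : ∃ c : Fin t, (good.card : ℝ) ≤ t * (good.filter (fun A => χ A = c)).card := by
    by_contra hcon
    push Not at hcon
    have : NeZero t := ⟨ht.ne'⟩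
    have h1 : ∑ c : Fin t, (t:ℝ) * (good.filter (fun A => χ A = c)).card < ∑ c : Fin t, (good.card : ℝ) :=
      Finset.sum_lt_sum_of_nonempty ⟨0, Finset.mem_univ _⟩ (fun c _ => hcon c)
    rw [← Finset.mul_sum] at h1
    have h6 : good.card = ∑ c : Fin t, (good.filter (fun A => χ A = c)).card :=
      Finset.card_eq_sum_card_fiberwise (fun _ _ => by simp)
    have h7 : ((good.card : ℕ) : ℝ) = ∑ c : Fin t, ((good.filter (fun A => χ A = c)).card : ℝ) := by
      rw [h6]; push_cast; rfl
    rw [← h7] at h1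
    simp at h1
  refine ⟨good.filter (fun A => χ A = c), ?_, ?_, ?_⟩
  · exact (Finset.filter_subset _ _).trans (Finset.filter_subset _ _)
  · linarith
  · intro A hA
    rw [Finset.mem_filter, hgood, Finset.mem_filter] at hA
    obtain ⟨⟨hAs, hAw⟩, hAc⟩ := hA
    have hpos : (0:ℝ) < (D A).card := by exact_mod_cast (hne A hAs).card_pos
    have h8 : (∑ B ∈ good.filter (fun A => χ A = c), (if A = B then 0 else ((D A ∩ D B).card : ℝ))) / (D A).card ≤ within A := by
      rw [Finset.sum_div]
      calc _ = ∑ B ∈ good.filter (fun A => χ A = c), (if χ A = χ B then w A B else 0) := by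
            apply Finset.sum_congr rfl; intro B hB
            have hAB : χ A = χ B := by rw [hAc, (Finset.mem_filter.mp hB).2]
            rw [if_pos hAB]
            simp only [hwdef]; split_ifs <;> simp
        _ ≤ _ := Finset.sum_le_sum_of_subset_of_nonneg ((Finset.filter_subset _ _).trans (Finset.filter_subset _ _))
            (fun B _ _ => by split_ifs; exacts [hw0 _ _, le_rfl])
    have h9 := h8.trans hAw
    rw [div_le_div_iff₀ hpos ht'] at h9
    linarith

end FT

namespace FT

section
variable {E X : Type*} [Fintype E] [DecidableEq E] [Fintype X] [Nonempty X]

lemma Pr_eq {Ω : Type*} [Fintype Ω] (p : Ω → Prop) [DecidablePred p] :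
    Pr p = Ex (fun ω => if p ω then (1:ℝ) else 0) := by
  unfold Pr; congr 1; ext ω; split_ifs <;> rfl

lemma Pr_coord_le (e : E) (q : X → Prop) : Pr (fun ω : E → X => q (ω e)) ≤ Pr q := by
  apply Pr_update_le e
  intro x; simp

lemma Pr_coord (e : E) (q : X → Prop) : Pr (fun ω : E → X => q (ω e)) = Pr q := by
  apply le_antisymm (Pr_coord_le e q)
  have := Pr_coord_le e (fun x => ¬ q x)
  rw [Pr_not q, Pr_not (fun ω : E → X => q (ω e))] at this
  linarith

lemma Pr_fin_lt (N a : ℕ) (h : a ≤ N) : Pr (fun x : Fin N => (x : ℕ) < a) = a / N := by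
  rw [Pr_eq]; unfold Ex
  rw [Finset.sum_boole, Fintype.card_fin]
  congr 2
  rw [Fin.card_filter_val_lt]; simp [h]

/-- the edges of `D` sampled at threshold `2 ^ i` -/
noncomputable def smp {L : ℕ} (ω : E → Fin (2 ^ L)) (i : ℕ) (D : Finset E) : Finset E :=
  D.filter (fun e => (ω e : ℕ) < 2 ^ i)

lemma smp_dep {L : ℕ} (i : ℕ) (D : Finset E) : Dep (fun ω : E → Fin (2 ^ L) => smp ω i D) D := by
  intro x y h
  unfold smp
  apply Finset.filter_congr
  intro e he; rw [h e he]

lemma Pr_hit {L i : ℕ} (hi : i ≤ L) (W : Finset E) :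
    Pr (fun ω : E → Fin (2 ^ L) => (smp ω i W).Nonempty) ≤ W.card * ((2:ℝ) ^ i / 2 ^ L) := by
  refine (Pr_mono ?_).trans (Pr_exists_le W (fun e ω => (ω e : ℕ) < 2 ^ i) _ ?_)
  · rintro ω ⟨e, he⟩
    rw [smp, Finset.mem_filter] at he
    exact ⟨e, he⟩
  · intro e _
    rw [Pr_coord e (fun x : Fin (2 ^ L) => (x : ℕ) < 2 ^ i), Pr_fin_lt _ _ (Nat.pow_le_pow_right (by norm_num) hi)]
    push_cast; exact le_rfl

lemma Pr_exact {L i : ℕ} (hi : i ≤ L) (W : Finset E) (h1 : 1 / 8 ≤ W.card * ((2:ℝ) ^ i / 2 ^ L))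
    (h2 : W.card * ((2:ℝ) ^ i / 2 ^ L) ≤ 1 / 2) :
    Pr (fun ω : E → Fin (2 ^ L) => ¬ ∃ e, smp ω i W = {e}) ≤ 15 / 16 := by
  set p : ℝ := (2:ℝ) ^ i / 2 ^ L with hp
  have hp0 : 0 < p := by positivity
  have hPr : ∀ e : E, Pr (fun ω : E → Fin (2 ^ L) => (ω e : ℕ) < 2 ^ i) = p := by
    intro e
    rw [Pr_coord e (fun x : Fin (2 ^ L) => (x : ℕ) < 2 ^ i), Pr_fin_lt _ _ (Nat.pow_le_pow_right (by norm_num) hi)]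
    push_cast; rfl
  have hp1 : p ≤ 1 := by
    rw [hp, div_le_one (by positivity)]; exact pow_le_pow_right₀ (by norm_num) hi
  have honly : ∀ e ∈ W, p * (1 - p) ^ (W.card - 1) ≤ Pr (fun ω : E → Fin (2 ^ L) => smp ω i W = {e}) := by
    intro e he
    let g : E → (E → Fin (2 ^ L)) → ℝ := fun e' ω =>
      if e' = e then (if (ω e' : ℕ) < 2 ^ i then 1 else 0) else (if ¬ (ω e' : ℕ) < 2 ^ i then 1 else 0)
    have hg : Ex (fun ω => ∏ e' ∈ W, g e' ω) = ∏ e' ∈ W, Ex (g e') := by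
      apply Ex_prod_of_dep W g (fun e' => {e'})
      · intro A _ B _ h; simpa using h
      · intro A _ x y h
        have := h A (by simp)
        simp only [g, this]
    have hge : ∀ e', Ex (g e') = if e' = e then p else 1 - p := by
      intro e'
      by_cases h : e' = e
      · simp only [g, h, if_true]; rw [← hPr e, Pr_eq]
      · simp only [g, h, if_false]
        rw [← hPr e', ← Pr_not, Pr_eq]
    have hprod : ∏ e' ∈ W, Ex (g e') = p * (1 - p) ^ (W.card - 1) := by
      rw [← Finset.mul_prod_erase W _ he, hge, if_pos rfl]
      congr 1
      rw [← Finset.card_erase_of_mem he, ← Finset.prod_const]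
      apply Finset.prod_congr rfl; intro e' he'
      rw [hge, if_neg (Finset.ne_of_mem_erase he')]
    rw [← hprod, ← hg, Pr_eq]
    apply Ex_mono; intro ω
    by_cases hs : smp ω i W = {e}
    · rw [if_pos hs]
      apply Finset.prod_le_one
      · intro e' _; simp only [g]; split_ifs <;> norm_num
      · intro e' _; simp only [g]; split_ifs <;> norm_num
    · rw [if_neg hs]
      apply le_of_eq
      by_contra hne
      apply hs
      rw [← ne_eq, Finset.prod_ne_zero_iff] at hne
      ext e'
      simp only [smp, Finset.mem_filter, Finset.mem_singleton]
      constructor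
      · rintro ⟨hW, hlt⟩
        by_contra hee
        have := hne e' hW
        simp [g, hee, hlt] at this
      · rintro rfl
        refine ⟨he, ?_⟩
        have := hne e' he
        by_contra hlt
        simp only [g, if_true, hlt, if_false] at this
        exact this rfl
  have hsum : W.card * (p * (1 - p) ^ (W.card - 1)) ≤ Pr (fun ω : E → Fin (2 ^ L) => ∃ e, smp ω i W = {e}) := by
    calc W.card * (p * (1 - p) ^ (W.card - 1)) = ∑ e ∈ W, p * (1 - p) ^ (W.card - 1) := by simp
      _ ≤ ∑ e ∈ W, Pr (fun ω : E → Fin (2 ^ L) => smp ω i W = {e}) := Finset.sum_le_sum honly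
      _ = Ex (fun ω => ∑ e ∈ W, if smp ω i W = {e} then (1:ℝ) else 0) := by
        rw [Ex_sum]; apply Finset.sum_congr rfl; intro e _; rw [Pr_eq]
      _ ≤ _ := by
        rw [Pr_eq]
        apply Ex_mono; intro ω
        by_cases h : ∃ e, smp ω i W = {e}
        · rw [if_pos h]
          obtain ⟨e, he⟩ := h
          simp only [he, Finset.singleton_inj]
          rw [Finset.sum_ite_eq]; split_ifs <;> norm_num
        · rw [if_neg h]
          apply le_of_eq
          apply Finset.sum_eq_zero; intro e _
          rw [if_neg]; intro h'; exact h ⟨e, h'⟩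
  rw [Pr_not]
  have hW : 1 ≤ W.card := by
    rcases Nat.eq_zero_or_pos W.card with h | h
    · rw [h] at h1; norm_num at h1
    · exact h
  have hb : 1 - (W.card : ℝ) * p ≤ (1 - p) ^ (W.card - 1) := by
    have := one_add_mul_le_pow (a := -p) (by linarith) (W.card - 1)
    rw [Nat.cast_sub hW] at this
    push_cast at this
    have h3 : (1 + -p) = 1 - p := by ring
    rw [h3] at this
    nlinarith
  have : (1:ℝ)/16 ≤ W.card * (p * (1 - p) ^ (W.card - 1)) := by
    have h5 : (W.card : ℝ) * p * (1 - W.card * p) ≤ W.card * p * (1 - p) ^ (W.card - 1) :=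
      mul_le_mul_of_nonneg_left hb (by positivity)
    nlinarith
  linarith

end

lemma Dep_comp {E X β γ : Type*} {f : (E → X) → β} {D : Finset E} (h : Dep f D) (g : β → γ) :
    Dep (fun ω => g (f ω)) D := fun x y hxy => by
  change g (f x) = g (f y); rw [h x y hxy]

lemma exists_level (L d : ℕ) (hd : 0 < d) (hL : 2 * d ≤ 2 ^ L) :
    ∃ i < L, (1:ℝ) / 4 < d * ((2:ℝ) ^ i / 2 ^ L) ∧ d * ((2:ℝ) ^ i / 2 ^ L) ≤ 1 / 2 := by
  let P := fun i => d * 2 ^ (i+1) ≤ 2 ^ L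
  have h0 : P 0 := by simp only [P]; omega
  have hlt : ∀ i, P i → i < L := by
    intro i hi
    simp only [P] at hi
    have h1 : 2 ^ (i+1) ≤ 2 ^ L := le_trans (Nat.le_mul_of_pos_left _ hd) hi
    have := (Nat.pow_le_pow_iff_right (by norm_num : 1 < 2)).mp h1
    omega
  let i := Nat.findGreatest P L
  have hi : P i := Nat.findGreatest_spec (Nat.zero_le L) h0
  have hi' : ¬ P (i+1) := by
    intro h
    have := Nat.le_findGreatest (hlt _ h).le h
    have h2 : i + 1 ≤ i := this
    omega
  refine ⟨i, hlt i hi, ?_, ?_⟩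
  · simp only [P, not_le] at hi'
    have h3 : (2:ℝ) ^ L < d * 2 ^ (i+1+1) := by exact_mod_cast hi'
    rw [mul_div_assoc', lt_div_iff₀ (by positivity)]
    rw [pow_succ, pow_succ] at h3; linarith
  · have h3 : (d:ℝ) * 2 ^ (i+1) ≤ 2 ^ L := by exact_mod_cast hi
    rw [mul_div_assoc', div_le_iff₀ (by positivity)]
    rw [pow_succ] at h3; linarith

end FT

namespace FT

noncomputable def δ0 : ℝ := 1 / (256 * 2 ^ 512)

lemma δ0_pos : 0 < δ0 := by unfold δ0; positivity

lemma num1 (q : ℕ) : (2:ℝ) ^ (-(63 / 64 * (q:ℝ))) * (1 + (2 - 1) * (15/16)) ^ q ≤ 2 ^ (-((q:ℝ) / 128)) := by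
  have h1 : (31/16 : ℝ) ≤ 2 ^ (31/32 : ℝ) := by
    have h : ((31/16 : ℝ)) ^ (32:ℕ) ≤ (2 ^ (31/32 : ℝ)) ^ (32:ℕ) := by
      rw [← Real.rpow_natCast (2 ^ (31/32 : ℝ)), ← Real.rpow_mul (by norm_num)]
      norm_num
    exact le_of_pow_le_pow_left₀ (by norm_num) (by positivity) h
  have h2 : (1 + (2 - 1) * (15/16) : ℝ) ^ q ≤ 2 ^ (31/32 * (q:ℝ)) := by
    rw [Real.rpow_mul (by norm_num), Real.rpow_natCast]
    apply pow_le_pow_left₀ (by norm_num)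
    refine le_trans (le_of_eq (by norm_num)) h1
  calc _ ≤ (2:ℝ) ^ (-(63 / 64 * (q:ℝ))) * 2 ^ (31/32 * (q:ℝ)) := mul_le_mul_of_nonneg_left h2 (by positivity)
    _ = 2 ^ (-(63 / 64 * (q:ℝ)) + 31/32 * (q:ℝ)) := (Real.rpow_add (by norm_num) _ _).symm
    _ ≤ _ := by
      apply Real.rpow_le_rpow_of_exponent_le (by norm_num)
      have : (0:ℝ) ≤ q := by positivity
      linarith

lemma num2 (q : ℕ) : ((2:ℝ) ^ 512) ^ (-((q:ℝ) / 256)) * (1 + ((2:ℝ) ^ 512 - 1) * (1 / 2 ^ 512)) ^ q ≤ 2 ^ (-((q:ℝ) / 128)) := by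
  have h2 : (1 + ((2:ℝ) ^ 512 - 1) * (1 / 2 ^ 512)) ^ q ≤ 2 ^ (q:ℝ) := by
    rw [Real.rpow_natCast]
    have hx : (1:ℝ) ≤ 2 ^ 512 := one_le_pow₀ (by norm_num)
    generalize (2:ℝ) ^ 512 = x at *
    have h3 : (x - 1) * (1 / x) ≤ 1 := by
      rw [mul_one_div, div_le_one (by linarith)]; linarith
    have h4 : 0 ≤ (x - 1) * (1 / x) := mul_nonneg (by linarith) (by positivity)
    apply pow_le_pow_left₀ (by linarith)
    linarith
  have h1 : ((2:ℝ) ^ 512) ^ (-((q:ℝ) / 256)) = 2 ^ (-(2 * (q:ℝ))) := by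
    rw [← Real.rpow_natCast 2 512, ← Real.rpow_mul (by norm_num)]
    congr 1; push_cast; ring
  rw [h1]
  calc _ ≤ (2:ℝ) ^ (-(2 * (q:ℝ))) * 2 ^ (q:ℝ) := mul_le_mul_of_nonneg_left h2 (by positivity)
    _ = 2 ^ (-(2 * (q:ℝ)) + (q:ℝ)) := (Real.rpow_add (by norm_num) _ _).symm
    _ ≤ _ := by
      apply Real.rpow_le_rpow_of_exponent_le (by norm_num)
      have : (0:ℝ) ≤ q := by positivity
      linarith

lemma one_round {E α : Type*} [Fintype E] [DecidableEq E] (L : ℕ) (s : Finset α) (D : α → Finset E)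
    (hne : ∀ A ∈ s, (D A).Nonempty)
    (h2 : ∀ e, (s.filter (fun A => e ∈ D A)).card ≤ 2)
    (hL : ∀ A ∈ s, 2 * (D A).card ≤ 2 ^ L) :
    Pr (fun ω : E → Fin (2 ^ L) =>
      ((s.filter (fun A => ∃ i < L, ∃ e, smp ω i (D A) = {e})).card : ℝ) < δ0 * s.card) ≤
      3 * (2:ℝ) ^ (-(δ0 * s.card)) := by
  obtain ⟨t, ht⟩ : ∃ t : ℕ, (t:ℝ) = 2 ^ 512 := ⟨2 ^ 512, Nat.cast_pow 2 512⟩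
  have ht1 : (4:ℝ) ≤ t := by
    rw [ht]; calc (4:ℝ) = 2 ^ 2 := by norm_num
      _ ≤ 2 ^ 512 := pow_le_pow_right₀ (by norm_num) (by norm_num)
  have ht0 : 0 < t := by
    have : (0:ℝ) < t := by linarith only [ht1]
    exact_mod_cast this
  have htp : (0:ℝ) < t := by linarith only [ht1]
  obtain ⟨Q, hQs, hQk, hQw⟩ := exists_Q t ht0 D s hne h2
  have hlev : ∀ A ∈ Q, ∃ i < L, (1:ℝ) / 4 < (D A).card * ((2:ℝ) ^ i / 2 ^ L) ∧ (D A).card * ((2:ℝ) ^ i / 2 ^ L) ≤ 1 / 2 :=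
    fun A hA => exists_level L _ (hne A (hQs hA)).card_pos (hL A (hQs hA))
  choose! lev hlevL hlev1 hlev2 using hlev
  let oth : α → Finset E := fun A => (Q.erase A).biUnion D
  let ext : α → Finset E := fun A => D A \ oth A
  let int : α → Finset E := fun A => D A ∩ oth A
  let own : E → Option α := fun e => if h : ∃ A, A ∈ Q ∧ e ∈ D A then some h.choose else none
  have hown : ∀ e, ∀ A ∈ Q, e ∈ D A → ∃ O ∈ Q, e ∈ D O ∧ own e = some O := by
    intro e A hA he
    have h : ∃ A, A ∈ Q ∧ e ∈ D A := ⟨A, hA, he⟩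
    exact ⟨h.choose, h.choose_spec.1, h.choose_spec.2, by simp only [own]; rw [dif_pos h]⟩
  let in1 : α → Finset E := fun A => (int A).filter (fun e => own e = some A)
  let in2 : α → Finset E := fun A => (int A).filter (fun e => own e ≠ some A)
  have hIntA : ∀ A ∈ Q, (t:ℝ) * (int A).card ≤ 2 * (D A).card := by
    intro A hA
    refine le_trans ?_ (hQw A hA)
    apply mul_le_mul_of_nonneg_left _ htp.le
    have h3 : int A = (Q.erase A).biUnion (fun B => D A ∩ D B) := by
      simp only [int, oth, Finset.inter_biUnion]
    have h4 : ((int A).card : ℝ) ≤ ∑ B ∈ Q.erase A, ((D A ∩ D B).card : ℝ) := by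
      rw [h3]; exact_mod_cast Finset.card_biUnion_le
    refine h4.trans (le_of_eq ?_)
    rw [← Finset.add_sum_erase Q _ hA, if_pos rfl, zero_add]
    apply Finset.sum_congr rfl
    intro B hB; rw [if_neg (Finset.ne_of_mem_erase hB).symm]
  have hpp : ∀ A, (0:ℝ) < (2:ℝ) ^ (lev A) / 2 ^ L := fun A => by positivity
  have hintp : ∀ A ∈ Q, ((int A).card : ℝ) * ((2:ℝ) ^ (lev A) / 2 ^ L) ≤ 1 / 2 ^ 512 := by
    intro A hA
    rw [← ht, le_div_iff₀ htp]
    have h5 := mul_le_mul_of_nonneg_right (hIntA A hA) (hpp A).le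
    have h6 := hlev2 A hA
    nlinarith
  have hb1 : ∀ A ∈ Q, Pr (fun ω : E → Fin (2 ^ L) => ¬ ∃ e, smp ω (lev A) (ext A) = {e}) ≤ 15 / 16 := by
    intro A hA
    have hsub : (ext A).card ≤ (D A).card := Finset.card_le_card Finset.sdiff_subset
    have hsub' : ((ext A).card : ℝ) ≤ (D A).card := by exact_mod_cast hsub
    have heq : ((ext A).card : ℝ) + (int A).card = (D A).card := by
      exact_mod_cast Finset.card_sdiff_add_card_inter (D A) (oth A)
    apply Pr_exact (hlevL A hA).le
    · have h5 := hIntA A hA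
      have h7 : ((int A).card : ℝ) ≤ (D A).card / 2 := by
        have h6 : (4:ℝ) * (int A).card ≤ t * (int A).card := mul_le_mul_of_nonneg_right ht1 (by positivity)
        linarith only [h5, h6]
      have h8 : ((D A).card : ℝ) / 2 ≤ (ext A).card := by linarith
      have h9 := mul_le_mul_of_nonneg_right h8 (hpp A).le
      have h10 := hlev1 A hA
      linarith
    · exact (mul_le_mul_of_nonneg_right hsub' (hpp A).le).trans (hlev2 A hA)
  have hb2 : ∀ A ∈ Q, ∀ W ⊆ int A, Pr (fun ω : E → Fin (2 ^ L) => (smp ω (lev A) W).Nonempty) ≤ 1 / 2 ^ 512 := by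
    intro A hA W hW
    refine (Pr_hit (hlevL A hA).le W).trans (le_trans ?_ (hintp A hA))
    apply mul_le_mul_of_nonneg_right _ (hpp A).le
    exact_mod_cast Finset.card_le_card hW
  have c1 := chernoff Q (fun A (ω : E → Fin (2 ^ L)) => ¬ ∃ e, smp ω (lev A) (ext A) = {e}) ext
    (by
      intro A hA B hB hAB
      rw [Finset.disjoint_left]
      intro e heA heB
      have h1 := (Finset.mem_sdiff.mp heA).2
      exact h1 (Finset.mem_biUnion.mpr ⟨B, Finset.mem_erase.mpr ⟨hAB.symm, hB⟩, (Finset.mem_sdiff.mp heB).1⟩))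
    (fun A hA => Dep_comp (smp_dep (lev A) (ext A)) (fun S => ¬ ∃ e, S = {e}))
    (15/16) 2 (63 / 64 * (Q.card:ℝ)) (by norm_num) hb1
  have c2 := chernoff Q (fun A (ω : E → Fin (2 ^ L)) => (smp ω (lev A) (in1 A)).Nonempty) in1
    (by
      intro A hA B hB hAB
      rw [Finset.disjoint_left]
      intro e heA heB
      have h1 := (Finset.mem_filter.mp heA).2
      have h2 := (Finset.mem_filter.mp heB).2
      rw [h1] at h2; exact hAB (Option.some_injective _ h2))
    (fun A hA => Dep_comp (smp_dep (lev A) (in1 A)) (fun S => S.Nonempty))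
    (1 / 2 ^ 512) (2 ^ 512) ((Q.card:ℝ) / 256) (one_le_pow₀ (by norm_num))
    (fun A hA => hb2 A hA _ (Finset.filter_subset _ _))
  have c3 := chernoff Q (fun A (ω : E → Fin (2 ^ L)) => (smp ω (lev A) (in2 A)).Nonempty) in2
    (by
      intro A hA B hB hAB
      rw [Finset.disjoint_left]
      intro e heA heB
      obtain ⟨h1, h1'⟩ := Finset.mem_filter.mp heA
      obtain ⟨h3, h3'⟩ := Finset.mem_filter.mp heB
      have heA := (Finset.mem_inter.mp h1).1
      have heB := (Finset.mem_inter.mp h3).1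
      obtain ⟨O, hO, heO, hoo⟩ := hown e A hA heA
      have hAO : A ≠ O := by rintro rfl; exact h1' hoo
      have hBO : B ≠ O := by rintro rfl; exact h3' hoo
      have h4 : ({A, B, O} : Finset α) ⊆ s.filter (fun A => e ∈ D A) := by
        intro x hx
        simp only [Finset.mem_insert, Finset.mem_singleton] at hx
        rw [Finset.mem_filter]
        rcases hx with rfl | rfl | rfl
        exacts [⟨hQs hA, heA⟩, ⟨hQs hB, heB⟩, ⟨hQs hO, heO⟩]
      have h5 := Finset.card_le_card h4
      rw [Finset.card_eq_three.mpr ⟨A, B, O, hAB, hAO, hBO, rfl⟩] at h5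
      have := h2 e
      omega)
    (fun A hA => Dep_comp (smp_dep (lev A) (in2 A)) (fun S => S.Nonempty))
    (1 / 2 ^ 512) (2 ^ 512) ((Q.card:ℝ) / 256) (one_le_pow₀ (by norm_num))
    (fun A hA => hb2 A hA _ (Finset.filter_subset _ _))
  have c1' := c1.trans (num1 Q.card)
  have c2' := c2.trans (num2 Q.card)
  have c3' := c3.trans (num2 Q.card)
  have hδ : δ0 * s.card ≤ (Q.card : ℝ) / 128 := by
    unfold δ0; rw [← ht, div_mul_eq_mul_div, one_mul, div_le_div_iff₀ (by positivity) (by norm_num)]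
    nlinarith
  have hexp : (2:ℝ) ^ (-((Q.card:ℝ) / 128)) ≤ 2 ^ (-(δ0 * s.card)) := by
    apply Real.rpow_le_rpow_of_exponent_le (by norm_num); linarith
  refine (Pr_mono ?_).trans (((Pr_or _ _).trans (add_le_add (Pr_or _ _) le_rfl)).trans
    (b := _) (le_trans (add_le_add (add_le_add c1' c2') c3') ?_))
  · intro ω hω
    by_contra hcon
    simp only [not_or, not_le] at hcon
    obtain ⟨⟨n1, n2⟩, n3⟩ := hcon
    set S := s.filter (fun A => ∃ i < L, ∃ e, smp ω i (D A) = {e}) with hS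
    have hcov : Q ⊆ ((S ∪ Q.filter (fun A => ¬ ∃ e, smp ω (lev A) (ext A) = {e})) ∪
        Q.filter (fun A => (smp ω (lev A) (in1 A)).Nonempty)) ∪ Q.filter (fun A => (smp ω (lev A) (in2 A)).Nonempty) := by
      intro A hA
      by_cases k1 : ∃ e, smp ω (lev A) (ext A) = {e}
      swap
      · simp only [Finset.mem_union, Finset.mem_filter]; exact Or.inl (Or.inl (Or.inr ⟨hA, k1⟩))
      by_cases k2 : (smp ω (lev A) (in1 A)).Nonempty
      · simp only [Finset.mem_union, Finset.mem_filter]; exact Or.inl (Or.inr ⟨hA, k2⟩)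
      by_cases k3 : (smp ω (lev A) (in2 A)).Nonempty
      · simp only [Finset.mem_union, Finset.mem_filter]; exact (Or.inr ⟨hA, k3⟩)
      have : A ∈ S := by
        rw [hS, Finset.mem_filter]
        refine ⟨hQs hA, lev A, hlevL A hA, ?_⟩
        obtain ⟨e, he⟩ := k1
        refine ⟨e, ?_⟩
        rw [← he]
        rw [Finset.not_nonempty_iff_eq_empty] at k2 k3
        ext x
        simp only [smp, Finset.mem_filter]
        constructor
        · rintro ⟨hx1, hx2⟩
          refine ⟨?_, hx2⟩
          by_contra hx3
          have hxi : x ∈ int A := by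
            simp only [int, Finset.mem_inter]; refine ⟨hx1, ?_⟩
            by_contra h; exact hx3 (Finset.mem_sdiff.mpr ⟨hx1, h⟩)
          by_cases ho : own x = some A
          · have : x ∈ smp ω (lev A) (in1 A) := by
              simp only [smp, Finset.mem_filter, in1]; exact ⟨⟨hxi, ho⟩, hx2⟩
            rw [k2] at this; simp at this
          · have : x ∈ smp ω (lev A) (in2 A) := by
              simp only [smp, Finset.mem_filter, in2]; exact ⟨⟨hxi, ho⟩, hx2⟩
            rw [k3] at this; simp at this
        · rintro ⟨hx1, hx2⟩
          exact ⟨(Finset.mem_sdiff.mp hx1).1, hx2⟩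
      simp only [Finset.mem_union]; exact Or.inl (Or.inl (Or.inl this))
    have hc := (Finset.card_le_card hcov).trans ((Finset.card_union_le _ _).trans
      (add_le_add ((Finset.card_union_le _ _).trans (add_le_add (Finset.card_union_le _ _) le_rfl)) le_rfl))
    have hc' : (Q.card : ℝ) ≤ S.card + (Q.filter (fun A => ¬ ∃ e, smp ω (lev A) (ext A) = {e})).card +
        (Q.filter (fun A => (smp ω (lev A) (in1 A)).Nonempty)).card + (Q.filter (fun A => (smp ω (lev A) (in2 A)).Nonempty)).card := by
      exact_mod_cast hc
    have n1' : ((Q.filter (fun A => ¬ ∃ e, smp ω (lev A) (ext A) = {e})).card : ℝ) < 63 / 64 * (Q.card:ℝ) := by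
      refine lt_of_eq_of_lt ?_ n1
      congr!
    have n2' : ((Q.filter (fun A => (smp ω (lev A) (in1 A)).Nonempty)).card : ℝ) < (Q.card:ℝ) / 256 := by
      refine lt_of_eq_of_lt ?_ n2
      congr!
    have n3' : ((Q.filter (fun A => (smp ω (lev A) (in2 A)).Nonempty)).card : ℝ) < (Q.card:ℝ) / 256 := by
      refine lt_of_eq_of_lt ?_ n3
      congr!
    have hω' : (S.card : ℝ) < δ0 * s.card := by
      convert hω using 3
    linarith only [hc', n1', n2', n3', hδ, hω']
  · linarith only [hexp]

end FT

namespace FT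

lemma halve {α β : Type*} [DecidableEq β] (s S : Finset α) (g : α → β) (hS : S ⊆ s)
    (h : ∀ a ∈ S, ∃ b ∈ s, b ≠ a ∧ g b = g a) : 2 * (s.image g).card + S.card ≤ 2 * s.card := by
  have h1 : s.card = ∑ b ∈ s.image g, (s.filter (fun a => g a = b)).card :=
    Finset.card_eq_sum_card_fiberwise (fun a ha => Finset.mem_image_of_mem g ha)
  have h2 : S.card = ∑ b ∈ s.image g, (S.filter (fun a => g a = b)).card :=
    Finset.card_eq_sum_card_fiberwise (fun a ha => Finset.mem_image_of_mem g (hS ha))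
  rw [h1, h2, Finset.card_eq_sum_ones, Finset.mul_sum, Finset.mul_sum, ← Finset.sum_add_distrib]
  apply Finset.sum_le_sum
  intro b hb
  have hle : (S.filter (fun a => g a = b)).card ≤ (s.filter (fun a => g a = b)).card :=
    Finset.card_le_card (Finset.filter_subset_filter _ hS)
  rcases Finset.eq_empty_or_nonempty (S.filter (fun a => g a = b)) with he | ⟨a, ha⟩
  · rw [he]
    obtain ⟨a, ha, hab⟩ := Finset.mem_image.mp hb
    have : 0 < (s.filter (fun a => g a = b)).card :=
      Finset.card_pos.mpr ⟨a, Finset.mem_filter.mpr ⟨ha, hab⟩⟩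
    simp only [Finset.card_empty]; omega
  · obtain ⟨haS, hab⟩ := Finset.mem_filter.mp ha
    obtain ⟨b', hb's, hne, hgb⟩ := h a haS
    have : 1 < (s.filter (fun a => g a = b)).card :=
      Finset.one_lt_card.mpr ⟨b', Finset.mem_filter.mpr ⟨hb's, hgb.trans hab⟩, a,
        Finset.mem_filter.mpr ⟨hS haS, hab⟩, hne⟩
    omega

section proc
variable {V : Type*} [Fintype V] [DecidableEq V]

def crosses (U : Finset V) (e : Sym2 V) : Prop := ∃ a b, e = s(a, b) ∧ a ∈ U ∧ b ∉ U

noncomputable def bd (E' : Finset (Sym2 V)) (U : Finset V) : Finset (Sym2 V) := E'.filter (crosses U)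

noncomputable def cls (r : Setoid V) (v : V) : Finset V := Finset.univ.filter (fun u => r u v)

noncomputable def nic (E' : Finset (Sym2 V)) (r : Setoid V) : Finset (Finset V) :=
  (Finset.univ.image (cls r)).filter (fun A => (bd E' A).Nonempty)

noncomputable def step (E' : Finset (Sym2 V)) (L : ℕ) (r : Setoid V) (ω : Sym2 V → Fin (2 ^ L)) : Setoid V :=
  r ⊔ Relation.EqvGen.setoid (fun u v => ∃ w, ∃ j < L, smp ω j (bd E' (cls r w)) = {s(u, v)})

lemma mem_cls {r : Setoid V} {u v : V} : u ∈ cls r v ↔ r u v := by simp [cls]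

lemma cls_eq {r : Setoid V} {u v : V} (h : r u v) : cls r u = cls r v := by
  ext w; rw [mem_cls, mem_cls]
  exact ⟨fun h' => r.trans' h' h, fun h' => r.trans' h' (r.symm' h)⟩

lemma mem_bd {E' : Finset (Sym2 V)} {U : Finset V} {e : Sym2 V} : e ∈ bd E' U ↔ e ∈ E' ∧ crosses U e := by
  simp [bd]

lemma crosses_mk {U : Finset V} {a b : V} : crosses U s(a, b) ↔ (a ∈ U ∧ b ∉ U) ∨ (b ∈ U ∧ a ∉ U) := by
  constructor
  · rintro ⟨c, d, h, hc, hd⟩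
    rcases Sym2.eq_iff.mp h with ⟨rfl, rfl⟩ | ⟨rfl, rfl⟩
    · exact Or.inl ⟨hc, hd⟩
    · exact Or.inr ⟨hc, hd⟩
  · rintro (⟨h1, h2⟩ | ⟨h1, h2⟩)
    · exact ⟨a, b, rfl, h1, h2⟩
    · exact ⟨b, a, Sym2.eq_swap, h1, h2⟩

lemma mem_nic {E' : Finset (Sym2 V)} {r : Setoid V} {A : Finset V} :
    A ∈ nic E' r ↔ (∃ v, cls r v = A) ∧ (bd E' A).Nonempty := by
  simp [nic]

lemma nic_step_le {E' : Finset (Sym2 V)} {r r' : Setoid V} (hr : r ≤ r') (S : Finset (Finset V)) (hS : S ⊆ nic E' r)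
    (h : ∀ A ∈ S, ∃ u v, s(u, v) ∈ E' ∧ u ∈ A ∧ v ∉ A ∧ r' u v) :
    2 * (nic E' r').card + S.card ≤ 2 * (nic E' r).card := by
  let g : Finset V → Finset V := fun A => A.biUnion (cls r')
  have hg : ∀ v, g (cls r v) = cls r' v := by
    intro v; ext w
    simp only [g, Finset.mem_biUnion, mem_cls]
    exact ⟨fun ⟨a, h1, h2⟩ => r'.trans' h2 (hr h1), fun h => ⟨v, r.refl' v, h⟩⟩
  have hsub : nic E' r' ⊆ (nic E' r).image g := by
    intro A hA
    obtain ⟨⟨v, rfl⟩, e, he⟩ := mem_nic.mp hA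
    obtain ⟨heE, a, b, rfl, ha, hb⟩ := mem_bd.mp he
    rw [mem_cls] at ha hb
    refine Finset.mem_image.mpr ⟨cls r a, mem_nic.mpr ⟨⟨a, rfl⟩, s(a, b), mem_bd.mpr ⟨heE, a, b, rfl, mem_cls.mpr (r.refl' a), ?_⟩⟩, ?_⟩
    · rw [mem_cls]; intro h; exact hb (r'.trans' (hr h) ha)
    · rw [hg]; exact cls_eq ha
  have := halve (nic E' r) S g hS (by
    intro A hA
    obtain ⟨u, v, he, hu, hv, huv⟩ := h A hA
    obtain ⟨⟨w, rfl⟩, -⟩ := mem_nic.mp (hS hA)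
    rw [mem_cls] at hu hv
    refine ⟨cls r v, mem_nic.mpr ⟨⟨v, rfl⟩, s(u, v), mem_bd.mpr ⟨he, v, u, Sym2.eq_swap, mem_cls.mpr (r.refl' v), ?_⟩⟩, ?_, ?_⟩
    · rw [mem_cls]; intro h; exact hv (r.trans' (r.symm' h) hu)
    · intro h; apply hv; rw [← mem_cls, ← h, mem_cls]
    · rw [hg, hg]; exact cls_eq (r'.trans' (r'.symm' huv) (hr hu)))
  have h3 := Finset.card_le_card hsub
  omega

lemma le_step (E' : Finset (Sym2 V)) (L : ℕ) (r : Setoid V) (ω : Sym2 V → Fin (2 ^ L)) : r ≤ step E' L r ω :=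
  le_sup_left

lemma nic_mono {E' : Finset (Sym2 V)} {r r' : Setoid V} (hr : r ≤ r') : (nic E' r').card ≤ (nic E' r).card := by
  have := nic_step_le (E' := E') hr ∅ (by simp) (by simp)
  simp at this; omega

lemma smp_subset {E : Type*} {L : ℕ} (ω : E → Fin (2 ^ L)) (j : ℕ) (D : Finset E) : smp ω j D ⊆ D :=
  Finset.filter_subset _ _

lemma step_good {E' : Finset (Sym2 V)} {L : ℕ} {r : Setoid V} {ω : Sym2 V → Fin (2 ^ L)} :
    2 * (nic E' (step E' L r ω)).card +
      ((nic E' r).filter (fun A => ∃ i < L, ∃ e, smp ω i (bd E' A) = {e})).card ≤ 2 * (nic E' r).card := by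
  apply nic_step_le (le_step _ _ _ _) _ (Finset.filter_subset _ _)
  intro A hA
  obtain ⟨hA1, i, hi, e, he⟩ := Finset.mem_filter.mp hA
  have hmem : e ∈ bd E' A := smp_subset ω i _ (by rw [he]; simp)
  obtain ⟨⟨w, rfl⟩, -⟩ := mem_nic.mp hA1
  obtain ⟨heE, a, b, rfl, ha, hb⟩ := mem_bd.mp hmem
  refine ⟨a, b, heE, ha, hb, ?_⟩
  have : Relation.EqvGen.setoid (fun u v => ∃ w, ∃ j < L, smp ω j (bd E' (cls r w)) = {s(u, v)}) ≤ step E' L r ω :=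
    le_sup_right
  exact this (Relation.EqvGen.rel _ _ ⟨w, i, hi, he⟩)

lemma step_prob (E' : Finset (Sym2 V)) (L : ℕ) (hL : 2 * Fintype.card (Sym2 V) ≤ 2 ^ L) (r : Setoid V) (T : ℝ) :
    Pr (fun ω : Sym2 V → Fin (2 ^ L) => T ≤ (nic E' r).card ∧
      (1 - δ0 / 2) * (nic E' r).card < (nic E' (step E' L r ω)).card) ≤ 3 * (2:ℝ) ^ (-(δ0 * T)) := by
  by_cases hT : T ≤ (nic E' r).card
  · have := one_round L (nic E' r) (bd E') (fun A hA => (mem_nic.mp hA).2)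
      (by
        intro e
        induction e using Sym2.ind with
        | _ a b =>
        refine (Finset.card_le_card (t := {cls r a, cls r b}) ?_).trans Finset.card_le_two
        intro A hA
        obtain ⟨h1, h2⟩ := Finset.mem_filter.mp hA
        obtain ⟨⟨w, rfl⟩, -⟩ := mem_nic.mp h1
        have h3 := (mem_bd.mp h2).2
        rw [crosses_mk, mem_cls, mem_cls] at h3
        simp only [Finset.mem_insert, Finset.mem_singleton]
        rcases h3 with ⟨h3, -⟩ | ⟨h3, -⟩
        · exact Or.inl (cls_eq h3).symm
        · exact Or.inr (cls_eq h3).symm)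
      (fun A hA => le_trans (Nat.mul_le_mul_left 2 (Finset.card_le_univ _)) hL)
    refine (Pr_mono ?_).trans (this.trans ?_)
    · rintro ω ⟨-, h⟩
      have h2 := step_good (E' := E') (L := L) (r := r) (ω := ω)
      have h3 : 2 * ((nic E' (step E' L r ω)).card : ℝ) +
        ((nic E' r).filter (fun A => ∃ i < L, ∃ e, smp ω i (bd E' A) = {e})).card ≤ 2 * (nic E' r).card := by
        exact_mod_cast h2
      refine lt_of_eq_of_lt (b := (((nic E' r).filter (fun A => ∃ i < L, ∃ e, smp ω i (bd E' A) = {e})).card : ℝ)) ?_ ?_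
      · congr!
      · linarith only [h, h3]
    · gcongr
      · norm_num
      · exact δ0_pos.le
  · refine (Pr_mono (q := fun _ => False) (fun ω h => hT h.1)).trans ?_
    have : Pr (fun _ : Sym2 V → Fin (2 ^ L) => False) = 0 := by simp [Pr, Ex]
    rw [this]; positivity

noncomputable def run (E' : Finset (Sym2 V)) (L R : ℕ) (r0 : Setoid V) (x : Fin R → Sym2 V → Fin (2 ^ L)) : ℕ → Setoid V
  | 0 => r0
  | i + 1 => if h : i < R then step E' L (run E' L R r0 x i) (x ⟨i, h⟩) else run E' L R r0 x i

lemma run_update (E' : Finset (Sym2 V)) (L R : ℕ) (r0 : Setoid V) (x : Fin R → Sym2 V → Fin (2 ^ L)) (k : Fin R)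
    (y : Sym2 V → Fin (2 ^ L)) (i : ℕ) (hi : i ≤ k) :
    run E' L R r0 (Function.update x k y) i = run E' L R r0 x i := by
  induction i with
  | zero => rfl
  | succ i ih =>
    have h : i < R := by omega
    simp only [run, dif_pos h]
    rw [ih (by omega), Function.update_of_ne]
    intro h'
    have := congrArg Fin.val h'
    simp at this; omega

lemma run_prob (E' : Finset (Sym2 V)) (L R : ℕ) (hL : 2 * Fintype.card (Sym2 V) ≤ 2 ^ L) (r0 : Setoid V) (T : ℝ)
    (hT : (1 - δ0 / 2) ^ R * (nic E' r0).card ≤ T) :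
    Pr (fun x : Fin R → Sym2 V → Fin (2 ^ L) => T < (nic E' (run E' L R r0 x R)).card) ≤
      R * (3 * (2:ℝ) ^ (-(δ0 * T))) := by
  have hδ : 0 ≤ 1 - δ0 / 2 := by
    have : δ0 ≤ 1 := by
      unfold δ0; rw [div_le_one (by positivity)]
      have : (1:ℝ) ≤ 2 ^ 512 := one_le_pow₀ (by norm_num)
      generalize (2:ℝ) ^ 512 = y at *
      linarith
    linarith
  have h := Pr_exists_le (Finset.univ : Finset (Fin R))
    (fun (k : Fin R) (x : Fin R → Sym2 V → Fin (2 ^ L)) => T ≤ (nic E' (run E' L R r0 x k)).card ∧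
      (1 - δ0 / 2) * (nic E' (run E' L R r0 x k)).card < (nic E' (run E' L R r0 x (k + 1))).card)
    (3 * (2:ℝ) ^ (-(δ0 * T))) (by
      intro k _
      apply Pr_update_le k
      intro x
      have := step_prob E' L hL (run E' L R r0 x k) T
      refine (Pr_mono ?_).trans this
      intro y hy
      rw [run_update _ _ _ _ _ _ _ _ le_rfl] at hy
      have h2 : run E' L R r0 (Function.update x k y) (k + 1) = step E' L (run E' L R r0 x k) y := by
        simp only [run, dif_pos k.2]
        rw [run_update _ _ _ _ _ _ _ _ le_rfl]; simp
      rw [h2] at hy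
      exact hy)
  rw [Finset.card_univ, Fintype.card_fin] at h
  refine (Pr_mono ?_).trans h
  intro x hx
  by_contra hcon
  push Not at hcon
  have key : ∀ i ≤ R, ((nic E' (run E' L R r0 x i)).card : ℝ) ≤ T ∨
      ((nic E' (run E' L R r0 x i)).card : ℝ) ≤ (1 - δ0 / 2) ^ i * (nic E' r0).card := by
    intro i
    induction i with
    | zero => intro _; right; simp [run]
    | succ i ih =>
      intro hi
      have hlt : i < R := hi
      have hc := hcon ⟨i, hlt⟩ (Finset.mem_univ _)
      have hmono : ((nic E' (run E' L R r0 x (i + 1))).card : ℝ) ≤ (nic E' (run E' L R r0 x i)).card := by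
        have : run E' L R r0 x i ≤ run E' L R r0 x (i + 1) := by
          simp only [run, dif_pos hlt]; exact le_step _ _ _ _
        exact_mod_cast nic_mono this
      by_cases hTi : T ≤ (nic E' (run E' L R r0 x i)).card
      · have h1 := hc hTi
        rcases ih hlt.le with h2 | h2
        · left; linarith
        · right
          refine h1.trans ?_
          rw [pow_succ', mul_assoc]
          exact mul_le_mul_of_nonneg_left h2 hδ
      · left; push Not at hTi; linarith
  rcases key R le_rfl with h1 | h1
  · linarith
  · linarith

end proc
end FT

namespace FT

lemma Pr_fst_le {Ω Ω' : Type*} [Fintype Ω] [Fintype Ω'] [Nonempty Ω'] (p : Ω → Prop) :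
    Pr (fun ω : Ω × Ω' => p ω.1) ≤ Pr p := by
  rw [← Pr_equiv (Equiv.prodComm Ω' Ω) (fun ω : Ω × Ω' => p ω.1)]
  apply Pr_prod_le
  intro a
  exact le_rfl

lemma Pr_snd_le {Ω Ω' : Type*} [Fintype Ω] [Fintype Ω'] [Nonempty Ω] (p : Ω' → Prop) :
    Pr (fun ω : Ω × Ω' => p ω.2) ≤ Pr p := by
  apply Pr_prod_le
  intro a
  exact le_rfl

lemma Pr_false {Ω : Type*} [Fintype Ω] (p : Ω → Prop) (h : ∀ ω, ¬ p ω) : Pr p = 0 := by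
  simp [Pr, Ex, h]

section proc
variable {V : Type*} [Fintype V] [DecidableEq V]

noncomputable def idx (e : Sym2 V) : ℕ := (Fintype.equivFin (Sym2 V) e : ℕ)

lemma idx_inj {e e' : Sym2 V} (h : idx e = idx e') : e = e' :=
  (Fintype.equivFin (Sym2 V)).injective (Fin.ext h)

lemma idx_lt (e : Sym2 V) : idx e < Fintype.card (Sym2 V) := (Fintype.equivFin (Sym2 V) e).2

lemma bad2 {K : Type*} [Field K] [Fintype K] (S : Finset (Sym2 V)) (e0 : Sym2 V) (h : S ≠ {e0}) :
    Pr (fun z : K => ∑ e ∈ S, z ^ idx e = z ^ idx e0) ≤ (Fintype.card (Sym2 V) : ℝ) / Fintype.card K := by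
  let p : Polynomial K := ∑ e ∈ S, Polynomial.X ^ idx e - Polynomial.X ^ idx e0
  have hcoef : ∀ e, p.coeff (idx e) = (if e ∈ S then 1 else 0) - (if e = e0 then 1 else 0) := by
    intro e
    simp only [p, Polynomial.coeff_sub, Polynomial.finsetSum_coeff, Polynomial.coeff_X_pow]
    congr 1
    · have : ∀ e' ∈ S, (if idx e = idx e' then (1:K) else 0) = if e = e' then 1 else 0 := by
        intro e' _
        by_cases h : e = e'
        · simp [h]
        · rw [if_neg h, if_neg]; intro h'; exact h (idx_inj h')
      rw [Finset.sum_congr rfl this, Finset.sum_ite_eq]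
    · by_cases h : e = e0
      · simp [h]
      · rw [if_neg h, if_neg]; intro h'; exact h (idx_inj h')
  have hp : p ≠ 0 := by
    intro h0
    apply h
    ext e
    have := hcoef e
    rw [h0, Polynomial.coeff_zero] at this
    rw [Finset.mem_singleton]
    by_cases h1 : e ∈ S <;> by_cases h2 : e = e0
    · exact ⟨fun _ => h2, fun _ => h1⟩
    · rw [if_pos h1, if_neg h2] at this; simp at this
    · rw [if_neg h1, if_pos h2] at this; simp at this
    · simp [h1, h2]
  have hdeg : p.natDegree ≤ Fintype.card (Sym2 V) := by
    apply (Polynomial.natDegree_sub_le _ _).trans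
    apply max_le
    · apply Polynomial.natDegree_sum_le_of_forall_le
      intro e _
      rw [Polynomial.natDegree_X_pow]; exact (idx_lt e).le
    · rw [Polynomial.natDegree_X_pow]; exact (idx_lt e0).le
  unfold Pr Ex
  apply div_le_div_of_nonneg_right _ (by positivity)
  rw [← Finset.sum_filter, Finset.sum_const, nsmul_eq_mul, mul_one]
  have hsub : (Finset.univ.filter (fun z : K => ∑ e ∈ S, z ^ idx e = z ^ idx e0)) ⊆ p.roots.toFinset := by
    intro z hz
    rw [Multiset.mem_toFinset, Polynomial.mem_roots hp, Polynomial.IsRoot]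
    simp only [p, Polynomial.eval_sub, Polynomial.eval_finsetSum, Polynomial.eval_pow, Polynomial.eval_X]
    rw [(Finset.mem_filter.mp hz).2, sub_self]
  have := (Finset.card_le_card hsub).trans ((Multiset.toFinset_card_le _).trans ((Polynomial.card_roots' p).trans hdeg))
  exact_mod_cast this

lemma bad3 {E : Type*} [Fintype E] [DecidableEq E] {B : ℕ} (S : Finset E) (h : S.Nonempty) :
    Pr (fun y : E → Fin B → ZMod 2 => ∑ e ∈ S, y e = 0) ≤ 1 / 2 ^ B := by
  obtain ⟨e0, he0⟩ := h
  apply Pr_update_le e0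
  intro x
  rw [Pr_eq]
  unfold Ex
  have hc : (Fintype.card (Fin B → ZMod 2) : ℝ) = 2 ^ B := by simp [ZMod.card]
  rw [hc]
  apply div_le_div_of_nonneg_right _ (by positivity)
  rw [Finset.sum_boole]
  have : (Finset.univ.filter (fun y : Fin B → ZMod 2 => ∑ e ∈ S, Function.update x e0 y e = 0)).card ≤ 1 := by
    rw [Finset.card_le_one]
    intro a ha b hb
    have key : ∀ y, ∑ e ∈ S, Function.update x e0 y e = y + ∑ e ∈ S.erase e0, x e := by
      intro y
      rw [← Finset.add_sum_erase S _ he0, Function.update_self]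
      congr 1
      apply Finset.sum_congr rfl
      intro e he
      rw [Function.update_of_ne (Finset.ne_of_mem_erase he)]
    have ha := (Finset.mem_filter.mp ha).2
    have hb := (Finset.mem_filter.mp hb).2
    rw [key] at ha hb
    exact add_right_cancel (ha.trans hb.symm)
  exact_mod_cast this

lemma bad3_union {B : ℕ} (E' : Finset (Sym2 V)) (N : Finset (Finset V)) :
    Pr (fun y : Sym2 V → Fin B → ZMod 2 => ∃ W ∈ N.powerset,
      (bd E' (W.biUnion id)).Nonempty ∧ ∑ e ∈ bd E' (W.biUnion id), y e = 0) ≤ 2 ^ N.card * (1 / 2 ^ B) := by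
  refine (Pr_exists_le _ _ (1 / 2 ^ B) ?_).trans ?_
  · intro W hW
    by_cases hq : (bd E' (W.biUnion id)).Nonempty
    · exact (Pr_mono (fun ω h => h.2)).trans (bad3 _ hq)
    · rw [Pr_false _ (fun ω h => hq h.1)]; positivity
  · rw [Finset.card_powerset]
    push_cast; exact le_rfl

def sat (r : Setoid V) (U : Finset V) : Prop := ∀ u v, r u v → u ∈ U → v ∈ U

lemma bd_sat (E' : Finset (Sym2 V)) (r : Setoid V) (U : Finset V) (hU : sat r U) :
    bd E' U = bd E' (((nic E' r).filter (fun A => A ⊆ U)).biUnion id) := by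
  have hcl : ∀ a ∈ U, cls r a ⊆ U := fun a ha w hw => hU a w (r.symm' (mem_cls.mp hw)) ha
  have hsub : ((nic E' r).filter (fun A => A ⊆ U)).biUnion id ⊆ U := by
    intro w hw
    obtain ⟨A, hA, hwA⟩ := Finset.mem_biUnion.mp hw
    exact (Finset.mem_filter.mp hA).2 hwA
  have hin : ∀ a b, s(a, b) ∈ E' → a ∈ U → ¬ r b a → a ∈ ((nic E' r).filter (fun A => A ⊆ U)).biUnion id := by
    intro a b he ha hab
    refine Finset.mem_biUnion.mpr ⟨cls r a, Finset.mem_filter.mpr ⟨mem_nic.mpr ⟨⟨a, rfl⟩, s(a, b), mem_bd.mpr ⟨he, a, b, rfl, mem_cls.mpr (r.refl' a), ?_⟩⟩, hcl a ha⟩, mem_cls.mpr (r.refl' a)⟩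
    rw [mem_cls]; exact hab
  ext e
  rw [mem_bd, mem_bd]
  refine and_congr_right fun he => ?_
  constructor
  · rintro ⟨a, b, rfl, ha, hb⟩
    refine ⟨a, b, rfl, hin a b he ha ?_, fun h => hb (hsub h)⟩
    intro h; exact hb (hU a b (r.symm' h) ha)
  · rintro ⟨a, b, rfl, ha, hb⟩
    refine ⟨a, b, rfl, hsub ha, ?_⟩
    intro hbU
    obtain ⟨A, hA, haA⟩ := Finset.mem_biUnion.mp ha
    apply hb
    by_cases hr : r b a
    · refine Finset.mem_biUnion.mpr ⟨A, hA, ?_⟩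
      obtain ⟨⟨w, rfl⟩, -⟩ := mem_nic.mp (Finset.mem_filter.mp hA).1
      exact mem_cls.mpr (r.trans' hr (mem_cls.mp haA))
    · exact hin b a (by rwa [Sym2.eq_swap]) hbU (fun h => hr (r.symm' h))

variable {K : Type*} [Field K] [Fintype K] {L R B : ℕ}

def Good (E' : Finset (Sym2 V)) (r0 : Setoid V) (x : Fin R → Sym2 V → Fin (2 ^ L)) (z : K)
    (y : Sym2 V → Fin B → ZMod 2) : Prop :=
  (∀ i : Fin R, ∀ w : V, ∀ j : Fin L, ∀ e0 : Sym2 V,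
    ∑ e ∈ smp (x i) j (bd E' (cls (run E' L R r0 x i) w)), z ^ idx e = z ^ idx e0 →
      smp (x i) j (bd E' (cls (run E' L R r0 x i) w)) = {e0}) ∧
  (∀ U, sat (run E' L R r0 x R) U → ∑ e ∈ bd E' U, y e = 0 → bd E' U = ∅)

abbrev Om (V K : Type*) (L R B : ℕ) : Type _ := (Fin R → Sym2 V → Fin (2 ^ L)) × (K × (Sym2 V → Fin B → ZMod 2))

lemma good_prob (E' : Finset (Sym2 V)) (r0 : Setoid V) (hL : 2 * Fintype.card (Sym2 V) ≤ 2 ^ L) (T : ℕ)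
    (hT : (1 - δ0 / 2) ^ R * (nic E' r0).card ≤ (T:ℝ)) :
    Pr (fun ω : Om V K L R B => ¬ Good E' r0 ω.1 ω.2.1 ω.2.2) ≤
      R * (3 * (2:ℝ) ^ (-(δ0 * T))) +
      ((R * Fintype.card V * L * Fintype.card (Sym2 V)) * ((Fintype.card (Sym2 V) : ℝ) / Fintype.card K) +
      2 ^ T * (1 / 2 ^ B)) := by
  let a (x : Fin R → Sym2 V → Fin (2 ^ L)) (z : K) : Prop :=
    ∃ q ∈ (Finset.univ : Finset (Fin R × V × Fin L × Sym2 V)),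
      smp (x q.1) q.2.2.1 (bd E' (cls (run E' L R r0 x q.1) q.2.1)) ≠ {q.2.2.2} ∧
      ∑ e ∈ smp (x q.1) q.2.2.1 (bd E' (cls (run E' L R r0 x q.1) q.2.1)), z ^ idx e = z ^ idx q.2.2.2
  let b (x : Fin R → Sym2 V → Fin (2 ^ L)) (y : Sym2 V → Fin B → ZMod 2) : Prop :=
    ((nic E' (run E' L R r0 x R)).card : ℝ) ≤ T ∧ ∃ W ∈ (nic E' (run E' L R r0 x R)).powerset,
      (bd E' (W.biUnion id)).Nonempty ∧ ∑ e ∈ bd E' (W.biUnion id), y e = 0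
  have h1 : Pr (fun ω : Om V K L R B => (T:ℝ) < (nic E' (run E' L R r0 ω.1 R)).card) ≤ _ :=
    (Pr_fst_le (fun x : Fin R → Sym2 V → Fin (2 ^ L) => (T:ℝ) < (nic E' (run E' L R r0 x R)).card)).trans
      (run_prob E' L R hL r0 T hT)
  have h2 : Pr (fun ω : Om V K L R B => a ω.1 ω.2.1) ≤ (R * Fintype.card V * L * Fintype.card (Sym2 V)) * ((Fintype.card (Sym2 V) : ℝ) / Fintype.card K) := by
    apply Pr_prod_le
    intro x
    refine (Pr_fst_le (fun z : K => a x z)).trans ?_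
    refine (Pr_exists_le _ _ ((Fintype.card (Sym2 V) : ℝ) / Fintype.card K) ?_).trans (le_of_eq ?_)
    · intro q _
      by_cases hq : smp (x q.1) q.2.2.1 (bd E' (cls (run E' L R r0 x q.1) q.2.1)) = {q.2.2.2}
      · refine (Pr_mono (q := fun _ => False) (fun ω h => h.1 hq)).trans ?_
        have : Pr (fun _ : K => False) = 0 := by simp [Pr, Ex]
        rw [this]; positivity
      · exact (Pr_mono (fun ω h => h.2)).trans (bad2 _ _ hq)
    · congr 1
      simp only [Finset.card_univ, Fintype.card_prod, Fintype.card_fin]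
      push_cast; ring
  have h3 : Pr (fun ω : Om V K L R B => b ω.1 ω.2.2) ≤ 2 ^ T * (1 / 2 ^ B) := by
    apply Pr_prod_le
    intro x
    refine (Pr_snd_le (fun y => b x y)).trans ?_
    by_cases hx : ((nic E' (run E' L R r0 x R)).card : ℝ) ≤ T
    · refine (Pr_mono (fun y (hy : b x y) => hy.2)).trans ((bad3_union E' _).trans ?_)
      apply mul_le_mul_of_nonneg_right _ (by positivity)
      apply pow_le_pow_right₀ (by norm_num)
      exact_mod_cast hx
    · rw [Pr_false _ (fun ω h => hx h.1)]; positivity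
  refine (Pr_mono ?_).trans ((Pr_or _ _).trans (add_le_add h1 ((Pr_or _ _).trans (add_le_add h2 h3))))
  intro ω hω
  by_contra hcon
  simp only [not_or] at hcon
  obtain ⟨c1, c2, c3⟩ := hcon
  push Not at c1
  apply hω
  constructor
  · intro i w j e0 h
    by_contra hne
    exact c2 ⟨(i, w, j, e0), Finset.mem_univ _, hne, h⟩
  · intro U hU hs
    by_contra hne
    rw [bd_sat E' _ U hU] at hs hne
    exact c3 ⟨c1, _, Finset.mem_powerset.mpr (Finset.filter_subset _ _), Finset.nonempty_iff_ne_empty.mpr hne, hs⟩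

abbrev Sk (K : Type*) (L R B : ℕ) : Type _ := (Fin R → Fin L → K) × (Fin B → ZMod 2)

noncomputable def drun (sk : Finset V → Sk K L R B) (z : K) (r0 : Setoid V) : ℕ → Setoid V
  | 0 => r0
  | i + 1 => if h : i < R then drun sk z r0 i ⊔ Relation.EqvGen.setoid (fun u v =>
      ∃ w, ∃ j : Fin L, (sk (cls (drun sk z r0 i) w)).1 ⟨i, h⟩ j = z ^ idx s(u, v)) else drun sk z r0 i

def dout (sk : Finset V → Sk K L R B) (z : K) (r0 : Setoid V) (s t : V) : Prop :=
  ∀ U, sat (drun sk z r0 R) U → s ∈ U → t ∉ U → (sk U).2 ≠ 0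

noncomputable def sig (x : Fin R → Sym2 V → Fin (2 ^ L)) (z : K) (y : Sym2 V → Fin B → ZMod 2) (e : Sym2 V) :
    Sk K L R B :=
  (fun i j => if (x i e : ℕ) < 2 ^ (j : ℕ) then z ^ idx e else 0, y e)

lemma dout_correct (E' : Finset (Sym2 V)) (H : SimpleGraph V) (hE : ∀ u v, s(u, v) ∈ E' ↔ H.Adj u v)
    (r0 : Setoid V) (hr0 : ∀ u v, r0 u v → H.Reachable u v)
    (x : Fin R → Sym2 V → Fin (2 ^ L)) (z : K) (y : Sym2 V → Fin B → ZMod 2) (hg : Good E' r0 x z y)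
    (sk : Finset V → Sk K L R B) (hsk : ∀ U, sat r0 U → sk U = ∑ e ∈ bd E' U, sig x z y e) (s t : V) :
    dout sk z r0 s t ↔ H.Reachable s t := by
  have hmono : ∀ i, r0 ≤ run E' L R r0 x i := by
    intro i
    induction i with
    | zero => exact le_rfl
    | succ i ih =>
      simp only [run]; split_ifs
      · exact ih.trans (le_step _ _ _ _)
      · exact ih
  have hcls : ∀ i w, sat r0 (cls (run E' L R r0 x i) w) := by
    intro i w u v huv hu
    rw [mem_cls] at hu ⊢
    exact Setoid.trans' _ (Setoid.symm' _ (hmono i huv)) hu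
  have hsum : ∀ U, sat r0 U → ∀ i : Fin R, ∀ j : Fin L, (sk U).1 i j = ∑ e ∈ smp (x i) j (bd E' U), z ^ idx e := by
    intro U hU i j
    rw [hsk U hU, Prod.fst_sum, Finset.sum_apply, Finset.sum_apply]
    simp only [sig, smp]
    rw [Finset.sum_filter]
  have hrun : ∀ i ≤ R, drun sk z r0 i = run E' L R r0 x i := by
    intro i
    induction i with
    | zero => intro _; rfl
    | succ i ih =>
      intro hi
      have hlt : i < R := hi
      simp only [run, drun, dif_pos hlt]
      rw [ih hlt.le]
      unfold step
      congr 2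
      ext u v
      constructor
      · rintro ⟨w, j, h⟩
        rw [hsum _ (hcls i w)] at h
        exact ⟨w, j, j.2, hg.1 ⟨i, hlt⟩ w j _ h⟩
      · rintro ⟨w, j, hj, h⟩
        refine ⟨w, ⟨j, hj⟩, ?_⟩
        rw [hsum _ (hcls i w), h, Finset.sum_singleton]
  have hreach : ∀ i, ∀ u v, run E' L R r0 x i u v → H.Reachable u v := by
    intro i
    induction i with
    | zero => exact hr0
    | succ i ih =>
      by_cases hlt : i < R
      swap
      · have e : run E' L R r0 x (i + 1) = run E' L R r0 x i := by simp only [run, dif_neg hlt]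
        rw [e]; exact ih
      have e : run E' L R r0 x (i + 1) = step E' L (run E' L R r0 x i) (x ⟨i, hlt⟩) := by
        simp only [run, dif_pos hlt]
      rw [e]
      have : step E' L (run E' L R r0 x i) (x ⟨i, hlt⟩) ≤ H.reachableSetoid := by
          apply sup_le
          · intro u v h; exact ih u v h
          · apply Setoid.eqvGen_le
            rintro u v ⟨w, j, hj, h⟩
            have : s(u, v) ∈ bd E' (cls (run E' L R r0 x i) w) := smp_subset (x ⟨i, hlt⟩) j _ (by rw [h]; simp)
            exact ((hE u v).mp (mem_bd.mp this).1).reachable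
      intro u v h; exact this h
  have hsatR : ∀ U, sat (run E' L R r0 x R) U → sat r0 U := fun U hU u v h => hU u v (hmono R h)
  have hsum2 : ∀ U, sat r0 U → (sk U).2 = ∑ e ∈ bd E' U, y e := by
    intro U hU
    rw [hsk U hU, Prod.snd_sum]; rfl
  unfold dout
  rw [hrun R le_rfl]
  constructor
  · intro h
    by_contra hst
    let U : Finset V := Finset.univ.filter (fun v => H.Reachable s v)
    have hmU : ∀ v, v ∈ U ↔ H.Reachable s v := by intro v; simp [U]
    have hU : sat (run E' L R r0 x R) U := by
      intro u v huv hu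
      rw [hmU] at *
      exact hu.trans (hreach R u v huv)
    apply h U hU ((hmU s).mpr (SimpleGraph.Reachable.refl s)) (fun h => hst ((hmU t).mp h))
    rw [hsum2 U (hsatR U hU)]
    have : bd E' U = ∅ := by
      rw [Finset.eq_empty_iff_forall_notMem]
      intro e he
      obtain ⟨heE, a, b, rfl, ha, hb⟩ := mem_bd.mp he
      rw [hmU] at ha hb
      exact hb (ha.trans ((hE a b).mp heE).reachable)
    rw [this, Finset.sum_empty]
  · intro h U hU hs ht h0
    rw [hsum2 U (hsatR U hU)] at h0
    have hemp := hg.2 U hU h0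
    obtain ⟨p⟩ := h
    apply ht
    clear ht
    induction p with
    | nil => exact hs
    | cons hadj p ih =>
      rename_i u v w
      apply ih
      by_contra hv
      have : s(u, v) ∈ bd E' U := mem_bd.mpr ⟨(hE u v).mpr hadj, u, v, rfl, hs, hv⟩
      rw [hemp] at this; simp at this

end proc
end FT

namespace FT

section sk
variable {n : ℕ} {S : Type*} [AddCommGroup S] [DecidableEq S]

noncomputable def qv (E0 : Finset (Sym2 (Fin n))) (σ : Sym2 (Fin n) → S) (v : Fin n) : S :=
  ∑ e ∈ E0.filter (fun e => v ∈ e), σ e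

noncomputable def pre (q : Fin n → S) (c : ℕ) : S := ∑ v ∈ Finset.univ.filter (fun v : Fin n => (v : ℕ) < c), q v

def chi (U : Finset (Fin n)) (k : ℕ) : Prop := ∃ h : k < n, (⟨k, h⟩ : Fin n) ∈ U

def dif (U : Finset (Fin n)) (b : ℕ) : Prop := 0 < b ∧ ¬ (chi U (b - 1) ↔ chi U b)

def bset (Bk : Finset (Fin (n + 1))) : Setoid (Fin n) where
  r u v := ∀ b ∈ Bk, (u : ℕ) < b ↔ (v : ℕ) < b
  iseqv := ⟨fun _ _ _ => Iff.rfl, fun h b hb => (h b hb).symm, fun h1 h2 b hb => (h1 b hb).trans (h2 b hb)⟩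

lemma sum_qv (hS : ∀ s : S, s + s = 0) (E0 : Finset (Sym2 (Fin n))) (hl : ∀ e ∈ E0, ¬ e.IsDiag)
    (σ : Sym2 (Fin n) → S) (U : Finset (Fin n)) : ∑ v ∈ U, qv E0 σ v = ∑ e ∈ bd E0 U, σ e := by
  unfold qv bd
  simp only [Finset.sum_filter]
  rw [Finset.sum_comm]
  apply Finset.sum_congr rfl
  intro e he
  have hd := hl e he
  clear he
  induction e using Sym2.ind with
  | _ a b =>
  rw [Sym2.mk_isDiag_iff] at hd
  have h1 : ∀ v : Fin n, (if v ∈ s(a, b) then σ s(a, b) else 0) =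
      (if v = a then σ s(a, b) else 0) + (if v = b then σ s(a, b) else 0) := by
    intro v
    by_cases ha : v = a
    · have hb : v ≠ b := fun h => hd (ha.symm.trans h)
      simp [ha, hd]
    · by_cases hb : v = b
      · simp [hb, Ne.symm hd]
      · simp [ha, hb]
  rw [Finset.sum_congr rfl (fun v _ => h1 v), Finset.sum_add_distrib, Finset.sum_ite_eq', Finset.sum_ite_eq']
  by_cases ha : a ∈ U <;> by_cases hb : b ∈ U <;> simp [crosses_mk, ha, hb, hS]

lemma pre_zero (q : Fin n → S) : pre q 0 = 0 := by simp [pre]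

lemma pre_succ (q : Fin n → S) (k : ℕ) (h : k < n) : pre q (k + 1) = pre q k + q ⟨k, h⟩ := by
  unfold pre
  have : Finset.univ.filter (fun v : Fin n => (v : ℕ) < k + 1) =
      insert ⟨k, h⟩ (Finset.univ.filter (fun v : Fin n => (v : ℕ) < k)) := by
    ext v
    simp only [Finset.mem_filter, Finset.mem_univ, true_and, Finset.mem_insert, Fin.ext_iff]
    omega
  rw [this, Finset.sum_insert (by simp), add_comm]

lemma sum_chi (U : Finset (Fin n)) (q : Fin n → S) (hS : ∀ s : S, s + s = 0) :
    ∀ m ≤ n, ∑ v ∈ U.filter (fun v : Fin n => (v : ℕ) < m), q v =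
      (∑ b ∈ (Finset.range m).filter (fun b => dif U b), pre q b) + (if 0 < m ∧ chi U (m - 1) then pre q m else 0) := by
  intro m
  induction m with
  | zero => simp
  | succ m ih =>
    intro hm
    have hmn : m < n := hm
    have h1 : ∑ v ∈ U.filter (fun v : Fin n => (v : ℕ) < m + 1), q v =
        ∑ v ∈ U.filter (fun v : Fin n => (v : ℕ) < m), q v + (if chi U m then q ⟨m, hmn⟩ else 0) := by
      by_cases hc : chi U m
      · obtain ⟨h, hU⟩ := hc
        have : U.filter (fun v : Fin n => (v : ℕ) < m + 1) = insert ⟨m, h⟩ (U.filter (fun v : Fin n => (v : ℕ) < m)) := by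
          ext v
          simp only [Finset.mem_filter, Finset.mem_insert, Fin.ext_iff]
          constructor
          · rintro ⟨h1, h2⟩
            by_cases h3 : (v : ℕ) = m
            · exact Or.inl h3
            · exact Or.inr ⟨h1, by omega⟩
          · rintro (h1 | h1)
            · have : v = ⟨m, h⟩ := Fin.ext h1
              rw [this]; exact ⟨hU, by simp⟩
            · exact ⟨h1.1, by omega⟩
        rw [this, Finset.sum_insert (by simp), if_pos ⟨h, hU⟩, add_comm]
      · have : U.filter (fun v : Fin n => (v : ℕ) < m + 1) = U.filter (fun v : Fin n => (v : ℕ) < m) := by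
          apply Finset.filter_congr
          intro v hv
          have : (v : ℕ) ≠ m := by
            intro h; apply hc; subst h; exact ⟨v.2, hv⟩
          omega
        rw [this, if_neg hc, add_zero]
    rw [h1, ih hmn.le, Finset.range_add_one, Finset.filter_insert]
    have hnm : m ∉ (Finset.range m).filter (fun b => dif U b) := by simp
    have h0 : pre q 0 = 0 := pre_zero q
    simp only [Nat.add_sub_cancel, Nat.succ_pos, true_and]
    rw [pre_succ q m hmn]
    rcases Nat.eq_zero_or_pos m with rfl | hpos
    · have hnd : ¬ dif U 0 := fun h => absurd h.1 (lt_irrefl 0)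
      rw [if_neg hnd]
      simp [h0]
    · by_cases hc1 : chi U (m - 1) <;> by_cases hc2 : chi U m
      · have hnd : ¬ dif U m := fun h => h.2 (by tauto)
        simp only [hnd, hc1, hc2, hpos, if_false, if_true, true_and]; abel
      · have hnd : dif U m := ⟨hpos, by tauto⟩
        rw [if_pos hnd, Finset.sum_insert hnm]
        simp only [hc1, hc2, hpos, if_false, if_true, true_and]; abel
      · have hnd : dif U m := ⟨hpos, by tauto⟩
        rw [if_pos hnd, Finset.sum_insert hnm]
        simp only [hc1, hc2, hpos, if_false, if_true, and_false]
        rw [add_comm (pre q m), add_zero, add_assoc, ← add_assoc (pre q m), hS, zero_add]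
      · have hnd : ¬ dif U m := fun h => h.2 (by tauto)
        simp only [hnd, hc1, hc2, if_false, and_false, add_zero]

lemma pre_n (hS : ∀ s : S, s + s = 0) (E0 : Finset (Sym2 (Fin n))) (hl : ∀ e ∈ E0, ¬ e.IsDiag)
    (σ : Sym2 (Fin n) → S) : pre (qv E0 σ) n = 0 := by
  unfold pre
  have : Finset.univ.filter (fun v : Fin n => (v : ℕ) < n) = Finset.univ := by ext v; simp
  rw [this, sum_qv hS E0 hl]
  have : bd E0 (Finset.univ : Finset (Fin n)) = ∅ := by
    ext e; rw [mem_bd]; simp [crosses]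
  rw [this, Finset.sum_empty]

lemma abel_sum (hS : ∀ s : S, s + s = 0) (E0 : Finset (Sym2 (Fin n))) (hl : ∀ e ∈ E0, ¬ e.IsDiag)
    (σ : Sym2 (Fin n) → S) (Bk : Finset (Fin (n + 1))) (U : Finset (Fin n)) (hU : sat (bset Bk) U) :
    ∑ b ∈ Bk.filter (fun b : Fin (n + 1) => dif U b), pre (qv E0 σ) b = ∑ e ∈ bd E0 U, σ e := by
  have hpn := pre_n hS E0 hl σ
  rw [← sum_qv hS E0 hl]
  have h := sum_chi U (qv E0 σ) hS n le_rfl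
  have h1 : U.filter (fun v : Fin n => (v : ℕ) < n) = U := by ext v; simp
  rw [h1, hpn] at h
  rw [h, ite_self, add_zero]
  set q := qv E0 σ
  have hsub : ((Bk.filter (fun b : Fin (n + 1) => dif U b)).image Fin.val).filter (fun b => b < n) =
      (Finset.range n).filter (fun b => dif U b) := by
    ext b
    simp only [Finset.mem_filter, Finset.mem_image, Finset.mem_range]
    constructor
    · rintro ⟨⟨c, ⟨hc, hd⟩, rfl⟩, hb⟩; exact ⟨hb, hd⟩
    · rintro ⟨hb, hd⟩
      refine ⟨⟨⟨b, by omega⟩, ⟨?_, hd⟩, rfl⟩, hb⟩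
      by_contra hnot
      apply hd.2
      have hb0 := hd.1
      have hrel : bset Bk ⟨b - 1, by omega⟩ ⟨b, hb⟩ := by
        intro c hc
        have : (c : ℕ) ≠ b := by
          intro h; apply hnot
          have : c = ⟨b, by omega⟩ := Fin.ext h
          rwa [← this]
        simp only
        omega
      exact ⟨fun ⟨h1, h2⟩ => ⟨hb, hU _ _ hrel h2⟩, fun ⟨h1, h2⟩ => ⟨by omega, hU _ _ (Setoid.symm' _ hrel) h2⟩⟩
  rw [← hsub, Finset.sum_filter (fun b => b < n), Finset.sum_image (fun a _ b _ h => Fin.ext h)]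
  apply Finset.sum_congr rfl
  intro b hb
  by_cases h : (b : ℕ) < n
  · rw [if_pos h]
  · have : (b : ℕ) = n := by omega
    rw [if_neg h, this, hpn]

abbrev TE (n : ℕ) (S : Type*) : Type _ := (Sym2 (Fin n) × S) × (Fin 2 → Fin (n + 1) × S)

noncomputable def FSd (T : Finset (TE n S)) : Finset (Sym2 (Fin n) × S) := T.image Prod.fst
noncomputable def BPd (T : Finset (TE n S)) : Finset (Fin (n + 1) × S) := T.biUnion (fun l => Finset.univ.image l.2)
noncomputable def Bkd (T : Finset (TE n S)) : Finset (Fin (n + 1)) := (BPd T).image Prod.fst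
noncomputable def skd (T : Finset (TE n S)) (U : Finset (Fin n)) : S :=
  ∑ p ∈ (BPd T).filter (fun p => dif U p.1), p.2 + ∑ p ∈ (FSd T).filter (fun p => crosses U p.1), p.2

noncomputable def lab (E0 : Finset (Sym2 (Fin n))) (σ : Sym2 (Fin n) → S) (a : Sym2 (Fin n) → Fin 2 → Fin (n + 1))
    (e : Sym2 (Fin n)) : TE n S := ((e, σ e), fun k => (a e k, pre (qv E0 σ) (a e k)))

noncomputable def brk (a : Sym2 (Fin n) → Fin 2 → Fin (n + 1)) (F : Finset (Sym2 (Fin n))) : Finset (Fin (n + 1)) :=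
  F.biUnion (fun e => Finset.univ.image (a e))

lemma BPd_lab (E0 : Finset (Sym2 (Fin n))) (σ : Sym2 (Fin n) → S) (a : Sym2 (Fin n) → Fin 2 → Fin (n + 1))
    (F : Finset (Sym2 (Fin n))) :
    BPd (F.image (lab E0 σ a)) = (brk a F).image (fun b : Fin (n + 1) => (b, pre (qv E0 σ) b)) := by
  ext p
  simp only [BPd, brk, Finset.mem_biUnion, Finset.mem_image, lab, Finset.mem_univ, true_and]
  constructor
  · rintro ⟨l, ⟨e, he, rfl⟩, k, rfl⟩
    exact ⟨a e k, ⟨e, he, k, rfl⟩, rfl⟩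
  · rintro ⟨b, ⟨e, he, k, rfl⟩, rfl⟩
    exact ⟨_, ⟨e, he, rfl⟩, k, rfl⟩

lemma Bkd_lab (E0 : Finset (Sym2 (Fin n))) (σ : Sym2 (Fin n) → S) (a : Sym2 (Fin n) → Fin 2 → Fin (n + 1))
    (F : Finset (Sym2 (Fin n))) : Bkd (F.image (lab E0 σ a)) = brk a F := by
  unfold Bkd
  rw [BPd_lab, Finset.image_image]
  exact Finset.image_id

lemma skd_lab (hS : ∀ s : S, s + s = 0) (E0 : Finset (Sym2 (Fin n))) (hl : ∀ e ∈ E0, ¬ e.IsDiag)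
    (σ : Sym2 (Fin n) → S) (a : Sym2 (Fin n) → Fin 2 → Fin (n + 1))
    (F : Finset (Sym2 (Fin n))) (hF : F ⊆ E0) (U : Finset (Fin n)) (hU : sat (bset (brk a F)) U) :
    skd (F.image (lab E0 σ a)) U = ∑ e ∈ bd (E0 \ F) U, σ e := by
  unfold skd
  rw [BPd_lab]
  have h1 : ∑ p ∈ ((brk a F).image (fun b : Fin (n + 1) => (b, pre (qv E0 σ) b))).filter (fun p => dif U p.1), p.2 =
      ∑ e ∈ bd E0 U, σ e := by
    rw [← abel_sum hS E0 hl σ (brk a F) U hU, Finset.sum_filter, Finset.sum_image, Finset.sum_filter]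
    intro b _ c _ h
    exact (Prod.ext_iff.mp h).1
  have h2 : ∑ p ∈ (FSd (F.image (lab E0 σ a))).filter (fun p => crosses U p.1), p.2 = ∑ e ∈ bd F U, σ e := by
    have : FSd (F.image (lab E0 σ a)) = F.image (fun e => (e, σ e)) := by
      unfold FSd; rw [Finset.image_image]; rfl
    rw [this, Finset.sum_filter, Finset.sum_image, bd, Finset.sum_filter]
    intro b _ c _ h
    exact (Prod.ext_iff.mp h).1
  rw [h1, h2]
  have h3 : bd E0 U = bd (E0 \ F) U ∪ bd F U := by
    ext e
    simp only [mem_bd, Finset.mem_union, Finset.mem_sdiff]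
    have : e ∈ F → e ∈ E0 := fun h => hF h
    tauto
  have h4 : Disjoint (bd (E0 \ F) U) (bd F U) := by
    rw [Finset.disjoint_left]
    intro e he he'
    exact (Finset.mem_sdiff.mp (mem_bd.mp he).1).2 (mem_bd.mp he').1
  rw [h3, Finset.sum_union h4, add_assoc, hS, add_zero]

lemma Bkd_lab_mem (E0 : Finset (Sym2 (Fin n))) (σ : Sym2 (Fin n) → S) (a : Sym2 (Fin n) → Fin 2 → Fin (n + 1))
    (F : Finset (Sym2 (Fin n))) (T : Finset (TE n S)) (hT : ∀ l, l ∈ T ↔ ∃ e ∈ F, lab E0 σ a e = l) :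
    Bkd T = brk a F := by
  have : T = F.image (lab E0 σ a) := by ext l; rw [hT, Finset.mem_image]
  rw [this, Bkd_lab]

lemma skd_lab_mem (hS : ∀ s : S, s + s = 0) (E0 : Finset (Sym2 (Fin n))) (hl : ∀ e ∈ E0, ¬ e.IsDiag)
    (σ : Sym2 (Fin n) → S) (a : Sym2 (Fin n) → Fin 2 → Fin (n + 1))
    (F : Finset (Sym2 (Fin n))) (T : Finset (TE n S)) (hT : ∀ l, l ∈ T ↔ ∃ e ∈ F, lab E0 σ a e = l)
    (hF : F ⊆ E0) (U : Finset (Fin n)) (hU : sat (bset (brk a F)) U) :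
    skd T U = ∑ e ∈ bd (E0 \ F) U, σ e := by
  have : T = F.image (lab E0 σ a) := by ext l; rw [hT, Finset.mem_image]
  rw [this, skd_lab hS E0 hl σ a F hF U hU]

lemma nic_card_le (E' : Finset (Sym2 (Fin n))) (a : Sym2 (Fin n) → Fin 2 → Fin (n + 1)) (F : Finset (Sym2 (Fin n))) :
    (nic E' (bset (brk a F))).card ≤ min (2 * F.card + 1) n := by
  have h0 : (nic E' (bset (brk a F))).card ≤ (Finset.univ.image (cls (bset (brk a F)))).card :=
    Finset.card_le_card (Finset.filter_subset _ _)
  apply le_min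
  · refine h0.trans ?_
    have hb : (brk a F).card ≤ 2 * F.card := by
      unfold brk
      refine Finset.card_biUnion_le.trans ?_
      rw [mul_comm, ← smul_eq_mul, ← Finset.sum_const]
      apply Finset.sum_le_sum
      intro e _
      exact Finset.card_image_le.trans (by simp)
    set Bk := brk a F
    let g : Fin n → ℕ := fun v => (Bk.filter (fun b : Fin (n + 1) => (b : ℕ) ≤ v)).card
    have hle : ∀ u v : Fin n, u ≤ v → g u = g v → bset Bk u v := by
      intro u v huv hg b hb
      have hsub : Bk.filter (fun b : Fin (n + 1) => (b : ℕ) ≤ u) ⊆ Bk.filter (fun b : Fin (n + 1) => (b : ℕ) ≤ v) := by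
        intro b hb
        rw [Finset.mem_filter] at *
        exact ⟨hb.1, hb.2.trans huv⟩
      have heq := Finset.eq_of_subset_of_card_le hsub hg.ge
      have : b ∈ Bk.filter (fun b : Fin (n + 1) => (b : ℕ) ≤ u) ↔ b ∈ Bk.filter (fun b : Fin (n + 1) => (b : ℕ) ≤ v) := by rw [heq]
      simp only [Finset.mem_filter, hb, true_and] at this
      omega
    have hg : ∀ u v, g u = g v → cls (bset Bk) u = cls (bset Bk) v := by
      intro u v h
      rcases le_total u v with h1 | h1
      · exact cls_eq (hle u v h1 h)
      · exact (cls_eq (hle v u h1 h.symm)).symm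
    have hcard : (Finset.univ.image (cls (bset Bk))).card ≤ (Finset.univ.image g).card := by
      have : ∀ k ∈ Finset.univ.image g, ∃ v, g v = k := by
        intro k hk; obtain ⟨v, -, h⟩ := Finset.mem_image.mp hk; exact ⟨v, h⟩
      rcases isEmpty_or_nonempty (Fin n) with hem | hne
      · simp [Finset.univ_eq_empty]
      choose! φ hφ using this
      refine (Finset.card_le_card (t := (Finset.univ.image g).image (fun k => cls (bset Bk) (φ k))) ?_).trans Finset.card_image_le
      intro A hA
      obtain ⟨v, -, rfl⟩ := Finset.mem_image.mp hA
      have hgv : g v ∈ Finset.univ.image g := Finset.mem_image_of_mem _ (Finset.mem_univ v)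
      exact Finset.mem_image.mpr ⟨g v, hgv, hg _ _ (hφ _ hgv)⟩
    refine hcard.trans ?_
    have : Finset.univ.image g ⊆ Finset.range (Bk.card + 1) := by
      intro k hk
      obtain ⟨v, -, rfl⟩ := Finset.mem_image.mp hk
      rw [Finset.mem_range]
      exact Nat.lt_succ_of_le (Finset.card_le_card (Finset.filter_subset _ _))
    have := Finset.card_le_card this
    rw [Finset.card_range] at this
    omega
  · refine h0.trans (Finset.card_image_le.trans ?_)
    simp

end sk

variable {n L R B : ℕ} {K : Type*} [Field K] [Fintype K]

noncomputable def dec (z : K) (s t : Fin n) (T : Finset (TE n (Sk K L R B))) : Prop :=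
  dout (skd T) z (bset (Bkd T)) s t

lemma Sk_char [CharP K 2] (s : Sk K L R B) : s + s = 0 := by
  ext
  · exact CharTwo.add_self_eq_zero _
  · exact CharTwo.add_self_eq_zero _

lemma dec_correct [CharP K 2] (H : SimpleGraph (Fin n)) (a : Sym2 (Fin n) → Fin 2 → Fin (n + 1))
    (F : Finset (Sym2 (Fin n))) (hF : F ⊆ H.edgeFinset)
    (hr0 : ∀ u v, bset (brk a F) u v → (H.deleteEdges (F : Set (Sym2 (Fin n)))).Reachable u v)
    (x : Fin R → Sym2 (Fin n) → Fin (2 ^ L)) (z : K) (y : Sym2 (Fin n) → Fin B → ZMod 2)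
    (hg : Good (H.edgeFinset \ F) (bset (brk a F)) x z y) (s t : Fin n)
    (T : Finset (TE n (Sk K L R B))) (hT : ∀ l, l ∈ T ↔ ∃ e ∈ F, lab H.edgeFinset (sig x z y) a e = l) :
    dec z s t T ↔ (H.deleteEdges (F : Set (Sym2 (Fin n)))).Reachable s t := by
  unfold dec
  rw [Bkd_lab_mem _ _ _ F T hT]
  apply dout_correct (H.edgeFinset \ F) _ _ _ hr0 x z y hg
  · intro U hU
    exact skd_lab_mem Sk_char _ (fun e he => H.not_isDiag_of_mem_edgeFinset he) _ _ _ T hT hF U hU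
  · intro u v
    simp [SimpleGraph.deleteEdges_adj]

end FT

namespace FT

lemma count_idx {α : Type*} [DecidableEq α] (l : List α) (p : ℕ → α) (e : α)
    (h : ∀ i (hi : i < l.length), l[i] = p i) :
    ((Finset.range l.length).filter (fun i => p i = e)).card = l.count e := by
  induction l generalizing p with
  | nil => simp
  | cons x l ih =>
    have := ih (fun i => p (i + 1)) (fun i hi => by
      have := h (i + 1) (by simpa using hi)
      simpa using this)
    rw [List.count_cons, ← this]
    have h0 : x = p 0 := h 0 (by simp)
    rw [List.length_cons, Finset.card_filter, Finset.card_filter, Finset.sum_range_succ', h0]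
    simp

lemma cover2 {α : Type*} [DecidableEq α] [Nonempty α] (s : Finset α) (hs : s.card ≤ 2) :
    ∃ a : Fin 2 → α, ∀ x ∈ s, ∃ k, a k = x := by
  rcases Nat.lt_or_ge s.card 1 with h | h
  · have : s = ∅ := by simpa using h
    exact ⟨fun _ => Classical.arbitrary α, by simp [this]⟩
  rcases Nat.lt_or_ge s.card 2 with h2 | h2
  · obtain ⟨x, hx⟩ := Finset.card_eq_one.mp (by omega : s.card = 1)
    exact ⟨fun _ => x, by intro y hy; rw [hx, Finset.mem_singleton] at hy; exact ⟨0, hy.symm⟩⟩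
  · obtain ⟨x, y, hxy, hs2⟩ := Finset.card_eq_two.mp (by omega : s.card = 2)
    refine ⟨![x, y], ?_⟩
    intro z hz
    rw [hs2, Finset.mem_insert, Finset.mem_singleton] at hz
    rcases hz with rfl | rfl
    · exact ⟨0, rfl⟩
    · exact ⟨1, rfl⟩

lemma tour_walk {V : Type*} [Fintype V] [DecidableEq V] (G : SimpleGraph V) (hG : G.Connected) (r : V) :
    ∀ k : ℕ, k + 1 ≤ Fintype.card V → ∃ w : G.Walk r r, k + 1 ≤ w.support.toFinset.card ∧ ∀ e, w.edges.count e ≤ 2 := by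
  intro k
  induction k with
  | zero => intro _; exact ⟨SimpleGraph.Walk.nil, by simp⟩
  | succ k ih =>
    intro hk
    obtain ⟨w, hw, he⟩ := ih (by omega)
    by_cases hc : k + 1 + 1 ≤ w.support.toFinset.card
    · exact ⟨w, hc, he⟩
    have hne : ∃ v, v ∉ w.support := by
      by_contra hcon
      push Not at hcon
      have : w.support.toFinset = Finset.univ := by ext v; simp [hcon v]
      rw [this, Finset.card_univ] at hc
      omega
    obtain ⟨v, hv⟩ := hne
    obtain ⟨p⟩ := hG.preconnected r v
    obtain ⟨d, hd, hd1, hd2⟩ := p.exists_boundary_dart {x | x ∈ w.support} (by simp) hv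
    simp only [Set.mem_ofPred_eq] at hd1 hd2
    have hsp := w.take_spec hd1
    refine ⟨(w.takeUntil _ hd1).append (SimpleGraph.Walk.cons d.adj (SimpleGraph.Walk.cons d.adj.symm (w.dropUntil _ hd1))), ?_, ?_⟩
    · have hsub : insert d.snd w.support.toFinset ⊆
        ((w.takeUntil _ hd1).append (SimpleGraph.Walk.cons d.adj (SimpleGraph.Walk.cons d.adj.symm (w.dropUntil _ hd1)))).support.toFinset := by
        intro x hx
        rw [Finset.mem_insert, List.mem_toFinset] at hx
        rw [List.mem_toFinset, SimpleGraph.Walk.mem_support_append_iff]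
        rcases hx with rfl | hx
        · right; simp
        · rw [← hsp, SimpleGraph.Walk.mem_support_append_iff] at hx
          rcases hx with hx | hx
          · exact Or.inl hx
          · right; simp [hx]
      have h1 := Finset.card_le_card hsub
      rw [Finset.card_insert_of_notMem (by simpa using hd2)] at h1
      omega
    · intro e
      have h1 : w.edges.count e = (w.takeUntil _ hd1).edges.count e + (w.dropUntil _ hd1).edges.count e := by
        conv_lhs => rw [← hsp, SimpleGraph.Walk.edges_append, List.count_append]
      have h2 := he e
      rw [SimpleGraph.Walk.edges_append, List.count_append, SimpleGraph.Walk.edges_cons, SimpleGraph.Walk.edges_cons,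
        List.count_cons, List.count_cons, Sym2.eq_swap (a := d.snd)]
      by_cases hee : s(d.fst, d.snd) = e
      · have : e ∉ w.edges := by
          intro hmem
          rw [← hee] at hmem
          exact hd2 (w.snd_mem_support_of_mem_edges hmem)
        have := List.count_eq_zero_of_not_mem this
        simp only [hee, beq_self_eq_true, if_true]
        omega
      · simp [hee]
        omega

lemma tour {n : ℕ} (G : SimpleGraph (Fin n)) (hG : G.Connected) :
    ∃ (π : Equiv.Perm (Fin n)) (a : Sym2 (Fin n) → Fin 2 → Fin (n + 1)),
      ∀ (F : Finset (Sym2 (Fin n))) (u v : Fin n), bset (brk a F) (π u) (π v) →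
        (G.deleteEdges (↑F : Set (Sym2 (Fin n)))).Reachable u v := by
  obtain ⟨r⟩ := hG.nonempty
  have hn : 0 < n := r.pos
  obtain ⟨w, hw, he⟩ := tour_walk G hG r (n - 1) (by simp; omega)
  have hall : ∀ v, ∃ i, w.getVert i = v ∧ i ≤ w.length := by
    intro v
    have : w.support.toFinset = Finset.univ := by
      rw [← Finset.card_eq_iff_eq_univ]
      have := Finset.card_le_univ w.support.toFinset
      simp only [Fintype.card_fin] at *
      omega
    have : v ∈ w.support.toFinset := by rw [this]; simp
    rw [List.mem_toFinset, SimpleGraph.Walk.mem_support_iff_exists_getVert] at this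
    exact this
  choose pos hpos hposl using hall
  have hinj : Function.Injective pos := by
    intro u v h
    rw [← hpos u, ← hpos v, h]
  let cl : ℕ → ℕ := fun i => (Finset.univ.filter (fun v : Fin n => pos v ≤ i)).card
  let cn : ℕ → Fin (n + 1) := fun i => ⟨cl i, by
    have := Finset.card_le_univ (Finset.univ.filter (fun v : Fin n => pos v ≤ i))
    simp only [Fintype.card_fin] at this
    show _ < _
    simp only [cl]
    omega⟩
  let rk : Fin n → ℕ := fun u => (Finset.univ.filter (fun v : Fin n => pos v < pos u)).card
  have hrk : ∀ u v, pos u < pos v → rk u < rk v := by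
    intro u v h
    apply Finset.card_lt_card
    rw [Finset.ssubset_iff_of_subset]
    · exact ⟨u, by simpa using h, by simp⟩
    · intro x hx
      simp only [Finset.mem_filter, Finset.mem_univ, true_and] at *
      omega
  have hrkn : ∀ u, rk u < n := by
    intro u
    have : (Finset.univ.filter (fun v : Fin n => pos v < pos u)).card < (Finset.univ : Finset (Fin n)).card := by
      apply Finset.card_lt_card
      rw [Finset.ssubset_iff_of_subset (Finset.subset_univ _)]
      exact ⟨u, by simp, by simp⟩
    simpa using this
  have hrinj : Function.Injective (fun u => (⟨rk u, hrkn u⟩ : Fin n)) := by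
    intro u v h
    simp only [Fin.mk.injEq] at h
    by_contra hne
    rcases Nat.lt_or_gt_of_ne (fun h' => hne (hinj h')) with h1 | h1
    · have := hrk _ _ h1; omega
    · have := hrk _ _ h1; omega
  let π : Equiv.Perm (Fin n) := Equiv.ofBijective _ (Finite.injective_iff_bijective.mp hrinj)
  have hπ : ∀ u, ((π u : Fin n) : ℕ) = rk u := fun u => rfl
  have hcov : ∀ e : Sym2 (Fin n), ∃ a : Fin 2 → Fin (n + 1), ∀ i, i < w.length → s(w.getVert i, w.getVert (i + 1)) = e →
      ∃ k, a k = cn i := by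
    intro e
    have h1 := count_idx w.edges (fun i => s(w.getVert i, w.getVert (i + 1))) e (by
      intro i hi
      exact SimpleGraph.Walk.getElem_edges hi)
    have h2 := he e
    rw [← h1] at h2
    obtain ⟨a, ha⟩ := cover2 (((Finset.range w.edges.length).filter (fun i => s(w.getVert i, w.getVert (i + 1)) = e)).image cn)
      (Finset.card_image_le.trans h2)
    refine ⟨a, fun i hi hie => ha _ (Finset.mem_image_of_mem _ ?_)⟩
    rw [Finset.mem_filter, Finset.mem_range, SimpleGraph.Walk.length_edges]
    exact ⟨hi, hie⟩
  choose a ha using hcov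
  refine ⟨π, a, ?_⟩
  intro F
  have key : ∀ u v, pos u ≤ pos v → bset (brk a F) (π u) (π v) → (G.deleteEdges (↑F : Set (Sym2 (Fin n)))).Reachable u v := by
    intro u v huv hb
    have step : ∀ j, pos u ≤ j → j ≤ pos v → (G.deleteEdges (↑F : Set (Sym2 (Fin n)))).Reachable u (w.getVert j) := by
      intro j hj
      induction j, hj using Nat.le_induction with
      | base => intro _; rw [hpos]
      | succ j hj ih =>
        intro hjv
        refine (ih (by omega)).trans ?_
        apply SimpleGraph.Adj.reachable
        have hjl : j < w.length := lt_of_lt_of_le (by omega) (hposl v)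
        rw [SimpleGraph.deleteEdges_adj]
        refine ⟨w.adj_getVert_succ hjl, ?_⟩
        intro hF
        obtain ⟨k, hk⟩ := ha _ j hjl rfl
        have hmem : cn j ∈ brk a F := by
          unfold brk
          rw [Finset.mem_biUnion]
          exact ⟨_, hF, Finset.mem_image.mpr ⟨k, Finset.mem_univ _, hk⟩⟩
        have hb2 := hb _ hmem
        rw [hπ, hπ] at hb2
        have h1 : rk u < cl j := by
          apply Finset.card_lt_card
          rw [Finset.ssubset_iff_of_subset]
          · exact ⟨u, by simpa using hj, by simp⟩
          · intro x hx
            simp only [Finset.mem_filter, Finset.mem_univ, true_and] at *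
            omega
        have h2 : cl j ≤ rk v := by
          apply Finset.card_le_card
          intro x hx
          simp only [Finset.mem_filter, Finset.mem_univ, true_and] at *
          omega
        have h3 : rk v < cl j := hb2.mp h1
        omega
    have := step (pos v) huv le_rfl
    rwa [hpos] at this
  intro u v hb
  rcases le_total (pos u) (pos v) with h | h
  · exact key u v h hb
  · exact (key v u h ((bset (brk a F)).symm hb)).symm

/-- relabelled form -/
lemma tour' {n : ℕ} (G : SimpleGraph (Fin n)) (hG : G.Connected) :
    ∃ (π : Equiv.Perm (Fin n)) (a : Sym2 (Fin n) → Fin 2 → Fin (n + 1)),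
      ∀ (F : Finset (Sym2 (Fin n))) (u v : Fin n), bset (brk a (F.image (Sym2.map π))) u v →
        ((G.comap π.symm).deleteEdges (↑(F.image (Sym2.map π)) : Set (Sym2 (Fin n)))).Reachable u v := by
  obtain ⟨π, a, h⟩ := tour G hG
  refine ⟨π, fun e => a (Sym2.map π.symm e), ?_⟩
  intro F u v huv
  have hb : brk (fun e => a (Sym2.map π.symm e)) (F.image (Sym2.map π)) = brk a F := by
    unfold brk
    rw [Finset.image_biUnion]
    apply Finset.biUnion_congr rfl
    intro e _
    show Finset.image (a (Sym2.map π.symm (Sym2.map π e))) _ = _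
    rw [Sym2.map_map]
    simp
  rw [hb] at huv
  have h1 := h F (π.symm u) (π.symm v) (by simpa using huv)
  have h2 := h1.map (G' := (G.comap π.symm).deleteEdges (↑(F.image (Sym2.map π)) : Set (Sym2 (Fin n)))) ⟨π, by
    intro x y hxy
    rw [SimpleGraph.deleteEdges_adj] at hxy ⊢
    refine ⟨by simpa using hxy.1, ?_⟩
    intro hm
    rw [Finset.coe_image] at hm
    obtain ⟨e, he, hee⟩ := hm
    have : e = s(x, y) := Sym2.map.injective π.injective (by rw [hee]; rfl)
    exact hxy.2 (this ▸ he)⟩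
  simpa using h2

end FT

namespace FT

lemma aug {n : ℕ} (hn : 0 < n) (G : SimpleGraph (Fin n)) :
    ∃ (G' : SimpleGraph (Fin n)) (κ : Fin n → Fin n), G ≤ G' ∧ G'.Connected ∧
      (∀ u v, κ u = κ v ↔ G.Reachable u v) ∧
      ∀ (F : Set (Sym2 (Fin n))), F ⊆ G.edgeSet → ∀ s t, κ s = κ t →
        ((G'.deleteEdges F).Reachable s t ↔ (G.deleteEdges F).Reachable s t) := by
  let κ : Fin n → Fin n := fun v => (G.connectedComponentMk v).out
  have hκr : ∀ v, G.Reachable (κ v) v := fun v => SimpleGraph.ConnectedComponent.exact (Quot.out_eq _)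
  have hκ : ∀ u v, κ u = κ v ↔ G.Reachable u v := by
    intro u v
    constructor
    · intro h
      exact (hκr u).symm.trans (h ▸ hκr v)
    · intro h
      show (G.connectedComponentMk u).out = (G.connectedComponentMk v).out
      rw [SimpleGraph.ConnectedComponent.sound h]
  have hκκ : ∀ v, κ (κ v) = κ v := fun v => (hκ _ _).mpr (hκr v)
  let G' : SimpleGraph (Fin n) :=
    { Adj := fun u v => G.Adj u v ∨ (u ≠ v ∧ κ u = u ∧ κ v = v)
      symm := ⟨by
        rintro u v (h | ⟨h1, h2, h3⟩)
        · exact Or.inl h.symm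
        · exact Or.inr ⟨h1.symm, h3, h2⟩⟩
      loopless := ⟨by
        rintro u (h | ⟨h1, _⟩)
        · exact G.loopless.irrefl u h
        · exact h1 rfl⟩ }
  have hle : G ≤ G' := fun u v h => Or.inl h
  refine ⟨G', κ, hle, ?_, hκ, ?_⟩
  · have : Nonempty (Fin n) := ⟨⟨0, hn⟩⟩
    refine ⟨?_⟩
    intro u v
    have h1 : G'.Reachable (κ u) (κ v) := by
      by_cases h : κ u = κ v
      · rw [h]
      · exact SimpleGraph.Adj.reachable (Or.inr ⟨h, hκκ u, hκκ v⟩)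
    exact (((hκr u).symm.mono hle).trans h1).trans ((hκr v).mono hle)
  · intro F hF s t hst
    constructor
    · rintro ⟨w⟩
      let φ : Fin n → Fin n := fun v => if κ v = κ s then v else κ s
      have key : ∀ u v (w : (G'.deleteEdges F).Walk u v), (G.deleteEdges F).Reachable (φ u) (φ v) := by
        intro u v w
        induction w with
        | nil => exact SimpleGraph.Reachable.refl _
        | cons h p ih =>
          refine SimpleGraph.Reachable.trans ?_ ih
          rename_i x y z
          rw [SimpleGraph.deleteEdges_adj] at h
          obtain ⟨h1 | ⟨h1, h2, h3⟩, h4⟩ := h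
          · have he : κ x = κ y := (hκ _ _).mpr h1.reachable
            by_cases hs : κ x = κ s
            · have hs' : κ y = κ s := he ▸ hs
              simp only [φ, hs, hs', if_true]
              apply SimpleGraph.Adj.reachable
              rw [SimpleGraph.deleteEdges_adj]
              exact ⟨h1, h4⟩
            · have hs' : κ y ≠ κ s := he ▸ hs
              simp only [φ, hs, hs', if_false]
              exact SimpleGraph.Reachable.refl _
          · have e : ∀ x, κ x = x → φ x = κ s := by
              intro x hx
              by_cases hs : κ x = κ s
              · simp only [φ, hs, if_true]; rw [← hs, hx]
              · simp only [φ, hs, if_false]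
            rw [e x h2, e y h3]
      have := key s t w
      simpa only [φ, if_true, hst.symm] using this
    · intro h
      exact h.mono (SimpleGraph.deleteEdges_mono hle)

lemma setup {n : ℕ} (hn : 0 < n) (G : SimpleGraph (Fin n)) :
    ∃ (H : SimpleGraph (Fin n)) (κ : Fin n → Fin n) (π : Equiv.Perm (Fin n)) (a : Sym2 (Fin n) → Fin 2 → Fin (n + 1)),
      ∀ F : Finset (Sym2 (Fin n)), (↑F : Set (Sym2 (Fin n))) ⊆ G.edgeSet →
        F.image (Sym2.map π) ⊆ H.edgeFinset ∧
        (∀ u v, bset (brk a (F.image (Sym2.map π))) u v →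
          (H.deleteEdges (↑(F.image (Sym2.map π)) : Set (Sym2 (Fin n)))).Reachable u v) ∧
        ∀ s t, (G.deleteEdges (↑F : Set (Sym2 (Fin n)))).Reachable s t ↔
          κ s = κ t ∧ (H.deleteEdges (↑(F.image (Sym2.map π)) : Set (Sym2 (Fin n)))).Reachable (π s) (π t) := by
  obtain ⟨G', κ, hle, hc, hκ, hr⟩ := aug hn G
  obtain ⟨π, a, ha⟩ := tour' G' hc
  refine ⟨G'.comap π.symm, κ, π, a, ?_⟩
  intro F hF
  refine ⟨?_, ha F, ?_⟩
  · intro e he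
    rw [Finset.mem_image] at he
    obtain ⟨e', he', rfl⟩ := he
    have := hF he'
    clear he'
    induction e' using Sym2.ind with
    | _ x y =>
    rw [SimpleGraph.mem_edgeSet] at this
    rw [Sym2.map_mk, SimpleGraph.mem_edgeFinset, SimpleGraph.mem_edgeSet]
    simpa using hle this
  · intro s t
    have iso : ∀ x y, ((G'.comap π.symm).deleteEdges (↑(F.image (Sym2.map π)) : Set (Sym2 (Fin n)))).Adj (π x) (π y) ↔
        (G'.deleteEdges (↑F : Set (Sym2 (Fin n)))).Adj x y := by
      intro x y
      rw [SimpleGraph.deleteEdges_adj, SimpleGraph.deleteEdges_adj, Finset.coe_image,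
        ← Sym2.map_mk, (Sym2.map.injective π.injective).mem_set_image]
      simp
    have h1 : ((G'.comap π.symm).deleteEdges (↑(F.image (Sym2.map π)) : Set (Sym2 (Fin n)))).Reachable (π s) (π t) ↔
        (G'.deleteEdges (↑F : Set (Sym2 (Fin n)))).Reachable s t := by
      let I : (G'.deleteEdges (↑F : Set (Sym2 (Fin n)))) ≃g ((G'.comap π.symm).deleteEdges (↑(F.image (Sym2.map π)) : Set (Sym2 (Fin n)))) :=
        ⟨π, by intro x y; exact iso x y⟩
      exact I.reachable_iff
    rw [h1]
    constructor
    · intro h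
      have hst : κ s = κ t := (hκ _ _).mpr (h.mono (SimpleGraph.deleteEdges_le _))
      exact ⟨hst, (hr _ hF s t hst).mpr h⟩
    · rintro ⟨hst, h⟩
      exact (hr _ hF s t hst).mp h

end FT

namespace FT

section core
variable {n : ℕ} {K : Type} [Field K] [Fintype K] [CharP K 2] {L R B : ℕ}

def D0 (p q : Fin n × Fin n × K) (T : Finset (TE n (Sk K L R B))) : Prop :=
  p.1 = q.1 ∧ dec p.2.2 p.2.1 q.2.1 T

noncomputable def errb (n cK L R B T : ℕ) : ℝ :=
  R*(3*(2:ℝ)^(-(δ0*T))) + ((R*n*L*(n*n:ℕ))*(((n*n:ℕ):ℝ)/cK) + 2^T*(1/2^B))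

lemma card_sym2_le (n : ℕ) : Fintype.card (Sym2 (Fin n)) ≤ n * n := by
  have := Fintype.card_le_of_surjective (fun p : Fin n × Fin n => s(p.1, p.2)) (by
    intro e
    induction e using Sym2.ind with
    | _ x y => exact ⟨(x, y), rfl⟩)
  simpa using this

lemma core (hn : 0 < n) (hL : 2 * (n * n) ≤ 2 ^ L) (T f : ℕ)
    (hT : (1-δ0/2)^R * (min (2*f+1) n : ℕ) ≤ (T:ℝ)) (hδ : 0 ≤ 1 - δ0/2) (G : SimpleGraph (Fin n)) :
    ∃ (lv : Om (Fin n) K L R B → Fin n → Fin n × Fin n × K) (le : Om (Fin n) K L R B → Sym2 (Fin n) → TE n (Sk K L R B)),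
      ∀ (s t : Fin n) (F : Finset (Sym2 (Fin n))), (↑F : Set (Sym2 (Fin n))) ⊆ G.edgeSet → F.card ≤ f →
        Pr (fun ω => ¬ (D0 (lv ω s) (lv ω t) (F.image (le ω)) ↔
          (G.deleteEdges (↑F : Set (Sym2 (Fin n)))).Reachable s t)) ≤ errb n (Fintype.card K) L R B T := by
  obtain ⟨H, κ, π, a, h⟩ := setup hn G
  refine ⟨fun ω v => (κ v, π v, ω.2.1), fun ω e => lab H.edgeFinset (sig ω.1 ω.2.1 ω.2.2) a (Sym2.map π e), ?_⟩
  intro s t F hF hf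
  obtain ⟨hsub, hr0, hre⟩ := h F hF
  set F' := F.image (Sym2.map π) with hF'
  have hc := card_sym2_le n
  have hnic : (nic (H.edgeFinset \ F') (bset (brk a F'))).card ≤ min (2*f+1) n := by
    refine (nic_card_le _ a F').trans ?_
    have : F'.card ≤ f := Finset.card_image_le.trans hf
    exact min_le_min (by omega) le_rfl
  have hg := good_prob (K := K) (B := B) (R := R) (H.edgeFinset \ F') (bset (brk a F')) (L := L) (by omega) T
    (le_trans (mul_le_mul_of_nonneg_left (by exact_mod_cast hnic) (pow_nonneg hδ _)) hT)
  refine (Pr_mono ?_).trans (hg.trans ?_)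
  · intro ω hω hgood
    apply hω
    rw [hre s t]
    unfold D0
    apply and_congr_right
    intro _
    refine dec_correct H a F' hsub hr0 ω.1 ω.2.1 ω.2.2 hgood (π s) (π t) _ ?_
    intro l
    simp [hF']
  · unfold errb
    have hc' : (Fintype.card (Sym2 (Fin n)) : ℝ) ≤ ((n * n : ℕ) : ℝ) := by exact_mod_cast hc
    rw [Fintype.card_fin]
    gcongr
end core

lemma enc_exists (α : Type) [Fintype α] [Nonempty α] (b : ℕ) (h : Fintype.card α ≤ 2 ^ b) :
    ∃ (en : α → Fin b → Bool) (de : (Fin b → Bool) → α), ∀ x, de (en x) = x := by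
  have : Fintype.card α ≤ Fintype.card (Fin b → Bool) := by simpa using h
  obtain ⟨g⟩ := Function.Embedding.nonempty_of_card_le this
  exact ⟨g, Function.invFun g, Function.leftInverse_invFun g.injective⟩

lemma bits {n : ℕ} (hn : 0 < n) (K : Type) [Field K] [Fintype K] [CharP K 2] (L R B T f bV bE : ℕ)
    (hL : 2 * (n * n) ≤ 2 ^ L) (hT : (1-δ0/2)^R * (min (2*f+1) n : ℕ) ≤ (T:ℝ)) (hδ : 0 ≤ 1 - δ0/2)
    (hV : Fintype.card (Fin n × Fin n × K) ≤ 2 ^ bV)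
    (hE : Fintype.card (TE n (Sk K L R B)) ≤ 2 ^ bE) (ε : ℝ) (hε : errb n (Fintype.card K) L R B T ≤ ε) :
    ∃ D : (Fin bV → Bool) → (Fin bV → Bool) → Finset (Fin bE → Bool) → Bool,
          ∀ G : SimpleGraph (Fin n),
            ∃ (N : ℕ) (μ : Fin N → ℝ)
              (LV : Fin N → Fin n → Fin bV → Bool)
              (LE : Fin N → Sym2 (Fin n) → Fin bE → Bool),
              (∀ ω, 0 ≤ μ ω) ∧ (∑ ω, μ ω = 1) ∧
              ∀ (s t : Fin n) (F : Finset (Sym2 (Fin n))),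
                (↑F : Set (Sym2 (Fin n))) ⊆ G.edgeSet → F.card ≤ f →
                1 - ε ≤
                  ∑ ω ∈ Finset.univ.filter (fun ω =>
                      (D (LV ω s) (LV ω t) (F.image (LE ω)) = true ↔
                        (G.deleteEdges (↑F : Set (Sym2 (Fin n)))).Reachable s t)),
                    μ ω := by
  let v0 : Fin n := ⟨0, hn⟩
  have hneV : Nonempty (Fin n × Fin n × K) := ⟨(v0, v0, 0)⟩
  have hne : Nonempty (TE n (Sk K L R B)) := ⟨((s(v0, v0), 0), fun _ => (0, 0))⟩
  obtain ⟨eV, dV, hdV⟩ := enc_exists (Fin n × Fin n × K) bV hV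
  obtain ⟨eE, dE, hdE⟩ := enc_exists (TE n (Sk K L R B)) bE hE
  refine ⟨fun p q S => decide (D0 (dV p) (dV q) (S.image dE)), ?_⟩
  intro G
  obtain ⟨lv, le, h⟩ := core (K := K) (B := B) hn hL T f hT hδ G
  have hOm : Nonempty (Om (Fin n) K L R B) := ⟨(fun _ _ => 0, 0, fun _ _ => 0)⟩
  let φ := Fintype.equivFin (Om (Fin n) K L R B)
  have hN : 0 < Fintype.card (Om (Fin n) K L R B) := Fintype.card_pos
  refine ⟨Fintype.card (Om (Fin n) K L R B), fun _ => 1 / (Fintype.card (Om (Fin n) K L R B) : ℝ),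
    fun ω v => eV (lv (φ.symm ω) v), fun ω e => eE (le (φ.symm ω) e), fun _ => by positivity, ?_, ?_⟩
  · rw [Finset.sum_const, Finset.card_univ, Fintype.card_fin, nsmul_eq_mul]
    field_simp
  · intro s t F hF hf
    have h1 := h s t F hF hf
    rw [Pr_not] at h1
    rw [← Pr_equiv φ.symm] at h1
    have h2 : ∀ ω, (decide (D0 (dV (eV (lv (φ.symm ω) s))) (dV (eV (lv (φ.symm ω) t)))
        ((F.image (fun e => eE (le (φ.symm ω) e))).image dE)) = true ↔ (G.deleteEdges (↑F : Set (Sym2 (Fin n)))).Reachable s t) ↔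
        (D0 (lv (φ.symm ω) s) (lv (φ.symm ω) t) (F.image (le (φ.symm ω))) ↔
          (G.deleteEdges (↑F : Set (Sym2 (Fin n)))).Reachable s t) := by
      intro ω
      rw [decide_eq_true_iff, hdV, hdV, Finset.image_image]
      have : (dE ∘ fun e => eE (le (φ.symm ω) e)) = le (φ.symm ω) := by
        funext e; simp [hdE]
      rw [this]
    have h3 : 1 - ε ≤ Pr (fun ω => (D0 (lv (φ.symm ω) s) (lv (φ.symm ω) t) (F.image (le (φ.symm ω))) ↔
          (G.deleteEdges (↑F : Set (Sym2 (Fin n)))).Reachable s t)) := by linarith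
    refine h3.trans (le_of_eq ?_)
    simp only [h2]
    rw [Pr, Ex, Finset.sum_filter, Finset.sum_div]
    apply Finset.sum_congr rfl
    intro ω _
    rw [Fintype.card_fin]
    split_ifs <;> simp

end FT

namespace FT

lemma par_ell (n : ℕ) (hn : 2 ≤ n) : ∃ l : ℕ, 1 ≤ l ∧ n ≤ 2 ^ l ∧ Real.logb 2 n ≤ l ∧ (l : ℝ) ≤ 2 * Real.logb 2 n ∧
    1 ≤ Real.logb 2 n := by
  have hn0 : (0:ℝ) < n := by positivity
  have h1 : n ≤ 2 ^ Nat.clog 2 n := Nat.le_pow_clog (by norm_num) n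
  have h2 : 2 ^ (Nat.clog 2 n - 1) < n := Nat.pow_pred_clog_lt_self (by norm_num) (by omega)
  have h3 : 1 ≤ Nat.clog 2 n := Nat.clog_pos (by norm_num) hn
  have h4 : 1 ≤ Real.logb 2 n := by
    rw [Real.le_logb_iff_rpow_le (by norm_num) hn0, Real.rpow_one]
    exact_mod_cast hn
  refine ⟨Nat.clog 2 n, h3, h1, ?_, ?_, h4⟩
  · rw [Real.logb_le_iff_le_rpow (by norm_num) hn0, Real.rpow_natCast]
    exact_mod_cast h1
  · have : ((Nat.clog 2 n - 1 : ℕ) : ℝ) ≤ Real.logb 2 n := by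
      rw [Real.le_logb_iff_rpow_le (by norm_num) hn0, Real.rpow_natCast]
      exact_mod_cast h2.le
    rw [Nat.cast_sub h3] at this
    push_cast at this
    linarith

lemma par_rho (n f l : ℕ) (hl : 1 ≤ l) (hnl : n ≤ 2 ^ l) (hlam : Real.logb 2 n ≤ l) (h1 : 1 ≤ Real.logb 2 n)
    (hf : 2 * (Real.logb 2 n) ^ 2 ≤ (f : ℝ)) :
    ∃ ρ : ℕ, 1 ≤ ρ ∧ ρ ≤ l ∧ (ρ : ℝ) ≤ 2 * Real.logb 2 ((f : ℝ) / (Real.logb 2 n) ^ 2) ∧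
      ((min (2*f+1) n : ℕ) : ℝ) ≤ 3 * 2 ^ ρ * (l:ℝ) ^ 2 := by
  set la := Real.logb 2 n with hla
  set r := Real.logb 2 ((f : ℝ) / la ^ 2) with hr
  have hl1 : (1:ℝ) ≤ l := by exact_mod_cast hl
  have hla2 : 1 ≤ la ^ 2 := by nlinarith
  have hq : 2 ≤ (f : ℝ) / la ^ 2 := by
    rw [le_div_iff₀ (by linarith)]; exact hf
  have hr1 : 1 ≤ r := by
    rw [hr, Real.le_logb_iff_rpow_le (by norm_num) (by linarith), Real.rpow_one]
    exact hq
  have hc1 : 1 ≤ ⌈r⌉₊ := by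
    rw [Nat.one_le_iff_ne_zero, ← Nat.pos_iff_ne_zero, Nat.ceil_pos]; linarith
  have hc2 : (⌈r⌉₊ : ℝ) < r + 1 := Nat.ceil_lt_add_one (by linarith)
  refine ⟨min ⌈r⌉₊ l, le_min hc1 hl, min_le_right _ _, ?_, ?_⟩
  · have : ((min ⌈r⌉₊ l : ℕ) : ℝ) ≤ (⌈r⌉₊ : ℝ) := by exact_mod_cast min_le_left _ _
    linarith
  · rcases le_total ⌈r⌉₊ l with h | h
    · rw [min_eq_left h]
      have hmin : ((min (2*f+1) n : ℕ) : ℝ) ≤ 2 * f + 1 := by exact_mod_cast min_le_left _ _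
      have hfr : (f : ℝ) ≤ 2 ^ ⌈r⌉₊ * (l:ℝ) ^ 2 := by
        have h2 : (f : ℝ) / la ^ 2 ≤ 2 ^ ⌈r⌉₊ := by
          rw [← Real.rpow_natCast 2 ⌈r⌉₊, ← Real.logb_le_iff_le_rpow (by norm_num) (by linarith)]
          exact Nat.le_ceil r
        rw [div_le_iff₀ (by linarith)] at h2
        refine h2.trans ?_
        gcongr
      nlinarith
    · rw [min_eq_right h]
      have hmin : ((min (2*f+1) n : ℕ) : ℝ) ≤ 2 ^ l := by
        exact_mod_cast (min_le_right _ _).trans hnl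
      have h0 : (0:ℝ) < 2 ^ l := by positivity
      have h3 : (1:ℝ) ≤ 3 * (l:ℝ) ^ 2 := by nlinarith
      calc _ ≤ (2:ℝ) ^ l := hmin
        _ ≤ 2 ^ l * (3 * (l:ℝ) ^ 2) := le_mul_of_one_le_right h0.le h3
        _ = _ := by ring

lemma par_err (n l ρ c' C1 q T m : ℕ) (hl : 1 ≤ l) (hρ : ρ ≤ l) (hnl : n ≤ 2 ^ l) (hq : 12 * C1 ≤ 2 ^ q)
    (hT : ((c' + 1 + q : ℕ) : ℝ) * l ≤ δ0 * T) (hm : m = (9 + c' + q) * l) :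
    errb n (2 ^ m) (2 * l + 1) (C1 * ρ) (T + (c' + 2) * l) T ≤ (2:ℝ) ^ (-((c' : ℝ) * l)) := by
  have hX : (1:ℝ) ≤ 2 ^ l := one_le_pow₀ (by norm_num)
  have hlX : (l : ℝ) ≤ 2 ^ l := by exact_mod_cast (Nat.lt_two_pow_self (n := l)).le
  have hρX : (ρ : ℝ) ≤ 2 ^ l := le_trans (by exact_mod_cast hρ) hlX
  have hnX : (n : ℝ) ≤ 2 ^ l := by exact_mod_cast hnl
  have hqr : (C1 : ℝ) ≤ 2 ^ q / 12 := by
    rw [le_div_iff₀ (by norm_num), mul_comm]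
    exact_mod_cast hq
  have hql : (2:ℝ) ^ q ≤ 2 ^ (q * l) := pow_le_pow_right₀ (by norm_num) (by nlinarith)
  have hCl : (C1 : ℝ) ≤ 2 ^ (q * l) / 12 := by linarith
  have hLX : ((2 * l + 1 : ℕ) : ℝ) ≤ (2 ^ l) ^ 3 := by
    rw [← pow_mul]
    have h1 : 2 * l + 1 ≤ 2 ^ (2 * l + 1) := (Nat.lt_two_pow_self).le
    have h2 : 2 ^ (2 * l + 1) ≤ 2 ^ (l * 3) := Nat.pow_le_pow_right (by norm_num) (by omega)
    exact_mod_cast h1.trans h2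
  have hA : (2:ℝ) ^ (-((c' : ℝ) * l)) = 1 / 2 ^ (c' * l) := by
    rw [Real.rpow_neg (by norm_num), one_div]
    congr 1
    exact_mod_cast Real.rpow_natCast 2 (c' * l)
  rw [hA]
  have hc0 : (0:ℝ) < 2 ^ (c' * l) := by positivity
  have hq0 : (0:ℝ) < 2 ^ (q * l) := by positivity
  have hX0 : (0:ℝ) < 2 ^ l := by positivity
  have t1 : ((C1 * ρ : ℕ) : ℝ) * (3 * (2:ℝ) ^ (-(δ0 * T))) ≤ 1 / 4 * (1 / 2 ^ (c' * l)) := by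
    have h1 : (2:ℝ) ^ (-(δ0 * T)) ≤ 1 / (2 ^ (c' * l) * 2 ^ l * 2 ^ (q * l)) := by
      have : (2:ℝ) ^ (c' * l) * 2 ^ l * 2 ^ (q * l) = (2:ℝ) ^ (((c' + 1 + q : ℕ) : ℝ) * l) := by
        rw [← pow_add, ← pow_add, ← Nat.cast_mul, Real.rpow_natCast]
        congr 1; ring
      rw [this, one_div, ← Real.rpow_neg (by norm_num)]
      apply Real.rpow_le_rpow_of_exponent_le (by norm_num)
      linarith
    calc ((C1 * ρ : ℕ) : ℝ) * (3 * (2:ℝ) ^ (-(δ0 * T)))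
        ≤ ((2 ^ (q * l) / 12) * 2 ^ l) * (3 * (1 / (2 ^ (c' * l) * 2 ^ l * 2 ^ (q * l)))) := by
          push_cast
          gcongr
      _ = _ := by field_simp; norm_num
  have t2 : (((C1 * ρ : ℕ) : ℝ) * n * ((2 * l + 1 : ℕ) : ℝ) * (n * n : ℕ)) * (((n * n : ℕ) : ℝ) / ((2 ^ m : ℕ) : ℝ)) ≤
      1 / 4 * (1 / 2 ^ (c' * l)) := by
    have hm2 : ((2 ^ m : ℕ) : ℝ) = (2 ^ l) ^ 9 * 2 ^ (c' * l) * 2 ^ (q * l) := by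
      push_cast
      rw [hm, ← pow_mul, ← pow_add, ← pow_add]
      congr 1; ring
    rw [hm2]
    calc (((C1 * ρ : ℕ) : ℝ) * n * ((2 * l + 1 : ℕ) : ℝ) * (n * n : ℕ)) * (((n * n : ℕ) : ℝ) / ((2 ^ l) ^ 9 * 2 ^ (c' * l) * 2 ^ (q * l)))
        ≤ (((2 ^ (q * l) / 12) * 2 ^ l) * 2 ^ l * (2 ^ l) ^ 3 * (2 ^ l * 2 ^ l)) * ((2 ^ l * 2 ^ l) / ((2 ^ l) ^ 9 * 2 ^ (c' * l) * 2 ^ (q * l))) := by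
          rw [Nat.cast_mul C1, Nat.cast_mul n]
          gcongr
      _ = 1 / 12 * (1 / 2 ^ (c' * l)) := by field_simp
      _ ≤ _ := by gcongr; norm_num
  have t3 : (2:ℝ) ^ T * (1 / 2 ^ (T + (c' + 2) * l)) ≤ 1 / 4 * (1 / 2 ^ (c' * l)) := by
    have : (2:ℝ) ^ (T + (c' + 2) * l) = 2 ^ T * 2 ^ (c' * l) * 2 ^ (2 * l) := by
      rw [← pow_add, ← pow_add]; congr 1; ring
    have h4 : (4:ℝ) ≤ 2 ^ (2 * l) := by
      have : (2:ℝ) ^ 2 ≤ 2 ^ (2 * l) := pow_le_pow_right₀ (by norm_num) (by omega)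
      linarith
    rw [this]
    calc (2:ℝ) ^ T * (1 / (2 ^ T * 2 ^ (c' * l) * 2 ^ (2 * l))) = 1 / 2 ^ (2 * l) * (1 / 2 ^ (c' * l)) := by field_simp
      _ ≤ _ := by gcongr
  have hpos : 0 ≤ 1 / (2:ℝ) ^ (c' * l) := by positivity
  unfold errb
  linarith only [t1, t2, t3, hpos]

lemma card_TE (n : ℕ) (S : Type) [Fintype S] :
    Fintype.card (TE n S) = Fintype.card (Sym2 (Fin n)) * Fintype.card S * ((n + 1) * Fintype.card S) ^ 2 := by
  rw [Fintype.card_prod, Fintype.card_prod, Fintype.card_fun, Fintype.card_prod, Fintype.card_fin, Fintype.card_fin]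

lemma final (c : ℝ) (hc : 1 ≤ c) : ∃ C : ℝ, ∀ n f : ℕ, 2 ≤ n →
      2 * (Real.logb 2 n) ^ 2 ≤ (f : ℝ) →
      ∃ bV bE : ℕ,
        (bV : ℝ) ≤ C * Real.logb 2 n ∧
        (bE : ℝ) ≤ C * (Real.logb 2 n) ^ 2 *
                      Real.logb 2 ((f : ℝ) / (Real.logb 2 n) ^ 2) ∧
        ∃ D : (Fin bV → Bool) → (Fin bV → Bool) → Finset (Fin bE → Bool) → Bool,
          ∀ G : SimpleGraph (Fin n),
            ∃ (N : ℕ) (μ : Fin N → ℝ)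
              (LV : Fin N → Fin n → Fin bV → Bool)
              (LE : Fin N → Sym2 (Fin n) → Fin bE → Bool),
              (∀ ω, 0 ≤ μ ω) ∧ (∑ ω, μ ω = 1) ∧
              ∀ (s t : Fin n) (F : Finset (Sym2 (Fin n))),
                (↑F : Set (Sym2 (Fin n))) ⊆ G.edgeSet → F.card ≤ f →
                1 - (n : ℝ) ^ (-c) ≤
                  ∑ ω ∈ Finset.univ.filter (fun ω =>
                      (D (LV ω s) (LV ω t) (F.image (LE ω)) = true ↔
                        (G.deleteEdges (↑F : Set (Sym2 (Fin n)))).Reachable s t)),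
                    μ ω := by
  have hδ0 := δ0_pos
  have hδ1 : δ0 ≤ 1 := by
    unfold δ0
    rw [div_le_one (by positivity)]
    exact one_le_mul_of_one_le_of_one_le (by norm_num) (one_le_pow₀ (by norm_num))
  have hδ : 0 ≤ 1 - δ0 / 2 := by linarith only [hδ1]
  obtain ⟨C1, hC1⟩ := exists_pow_lt_of_lt_one (by norm_num : (0:ℝ) < 1/2) (by linarith only [hδ0] : 1 - δ0 / 2 < 1)
  obtain ⟨c', hc'⟩ := exists_nat_ge c
  obtain ⟨K1, hK1⟩ := exists_nat_ge (((c' + 1 + 12 * C1 : ℕ) : ℝ) / δ0)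
  rw [div_le_iff₀ hδ0] at hK1
  set q := 12 * C1 with hq
  have hq2 : 12 * C1 ≤ 2 ^ q := (Nat.lt_two_pow_self).le
  set cm := 9 + c' + q with hcm
  set K0 := K1 + 3 with hK0
  set CE := 6 + 9 * cm * C1 + 3 * (K0 + c' + 2) with hCE
  refine ⟨2 * (2 + cm : ℕ) + 8 * CE, ?_⟩
  intro n f hn hf
  obtain ⟨l, hl, hnl, hlam, hl2, h1⟩ := par_ell n hn
  obtain ⟨ρ, hρ1, hρl, hρ2, hmin⟩ := par_rho n f l hl hnl hlam h1 hf
  set la := Real.logb 2 n with hla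
  set r := Real.logb 2 ((f : ℝ) / la ^ 2) with hr
  have hr0 : 0 ≤ r := by
    have : (1:ℝ) ≤ ρ := by exact_mod_cast hρ1
    linarith
  let m := cm * l
  let L := 2 * l + 1
  let R := C1 * ρ
  let T := K0 * l ^ 2
  let B := T + (c' + 2) * l
  have hm0 : m ≠ 0 := by
    have : 0 < cm * l := Nat.mul_pos (by omega) (by omega)
    omega
  have : Fact (Nat.Prime 2) := ⟨Nat.prime_two⟩
  let _ : Fintype (GaloisField 2 m) := Fintype.ofFinite _
  have hcK : Fintype.card (GaloisField 2 m) = 2 ^ m := by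
    rw [← Nat.card_eq_fintype_card]; exact GaloisField.card 2 m hm0
  have hn1 : n + 1 ≤ 2 ^ (l + 1) := by
    have : 1 ≤ 2 ^ l := Nat.one_le_two_pow
    rw [pow_succ]; omega
  refine ⟨2 * l + m, 2 * l + 3 * (m * L * R + B) + 2 * (l + 1), ?_, ?_, ?_⟩
  · have : ((2 * l + m : ℕ) : ℝ) = (2 + cm : ℕ) * l := by
      simp only [m]; push_cast; ring
    rw [this]
    have h2 : ((2 + cm : ℕ) : ℝ) * l ≤ (2 + cm : ℕ) * (2 * la) := by gcongr
    have h3 : 0 ≤ (8 * CE : ℝ) * la := by positivity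
    linarith only [h2, h3]
  · have hnat : 2 * l + 3 * (m * L * R + B) + 2 * (l + 1) ≤ CE * (ρ * l ^ 2) := by
      have e1 : l ≤ l ^ 2 := by nlinarith
      have e2 : l ^ 2 ≤ ρ * l ^ 2 := Nat.le_mul_of_pos_left _ hρ1
      have e3 : l ≤ ρ * l ^ 2 := e1.trans e2
      have e4 : 1 ≤ ρ * l ^ 2 := hl.trans e3
      have e5 : m * L * R ≤ 3 * cm * C1 * (ρ * l ^ 2) := by
        simp only [m, L, R]
        calc cm * l * (2 * l + 1) * (C1 * ρ) ≤ cm * l * (3 * l) * (C1 * ρ) := by gcongr; omega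
          _ = _ := by ring
      have e6 : B ≤ (K0 + c' + 2) * (ρ * l ^ 2) := by
        simp only [B, T]
        calc K0 * l ^ 2 + (c' + 2) * l ≤ K0 * (ρ * l ^ 2) + (c' + 2) * (ρ * l ^ 2) := by gcongr
          _ = _ := by ring
      have e7 : CE * (ρ * l ^ 2) = 6 * (ρ * l ^ 2) + 3 * (3 * cm * C1 * (ρ * l ^ 2)) + 3 * ((K0 + c' + 2) * (ρ * l ^ 2)) := by
        rw [hCE]; ring
      rw [e7]
      omega
    have hreal : ((2 * l + 3 * (m * L * R + B) + 2 * (l + 1) : ℕ) : ℝ) ≤ CE * (ρ * (l:ℝ) ^ 2) := by exact_mod_cast hnat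
    refine hreal.trans ?_
    have h2 : (CE : ℝ) * (ρ * (l:ℝ) ^ 2) ≤ CE * ((2 * r) * (2 * la) ^ 2) := by gcongr
    have h3 : 0 ≤ (2 * (2 + cm : ℕ) : ℝ) * la ^ 2 * r := by positivity
    linarith only [h2, h3]
  · refine bits (by omega) (GaloisField 2 m) L R B T f _ _ ?_ ?_ hδ ?_ ?_ _ ?_
    · calc 2 * (n * n) ≤ 2 * (2 ^ l * 2 ^ l) := by gcongr
        _ = 2 ^ L := by simp only [L]; ring
    · have h2 : (1 - δ0 / 2) ^ R ≤ (1 / 2) ^ ρ := by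
        simp only [R]
        rw [pow_mul]
        exact pow_le_pow_left₀ (pow_nonneg hδ _) hC1.le _
      calc (1 - δ0 / 2) ^ R * ((min (2 * f + 1) n : ℕ) : ℝ) ≤ (1 / 2) ^ ρ * (3 * 2 ^ ρ * (l:ℝ) ^ 2) := by gcongr
        _ = 3 * (l:ℝ) ^ 2 := by
          rw [one_div, inv_pow]; field_simp
        _ ≤ (T : ℝ) := by
          simp only [T, hK0]; push_cast
          have : 0 ≤ (K1 : ℝ) * (l:ℝ) ^ 2 := by positivity
          linarith only [this]
    · rw [Fintype.card_prod, Fintype.card_prod, Fintype.card_fin, hcK]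
      calc n * (n * 2 ^ m) ≤ 2 ^ l * (2 ^ l * 2 ^ m) := by gcongr
        _ = _ := by ring
    · have hS : Fintype.card (Sk (GaloisField 2 m) L R B) = 2 ^ (m * L * R + B) := by
        simp only [Fintype.card_prod, Fintype.card_fun, Fintype.card_fin, hcK, ZMod.card]
        ring
      rw [card_TE, hS]
      have := card_sym2_le n
      calc Fintype.card (Sym2 (Fin n)) * 2 ^ (m * L * R + B) * ((n + 1) * 2 ^ (m * L * R + B)) ^ 2
          ≤ (2 ^ l * 2 ^ l) * 2 ^ (m * L * R + B) * (2 ^ (l + 1) * 2 ^ (m * L * R + B)) ^ 2 := by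
            gcongr
            exact this.trans (by gcongr)
        _ = _ := by ring
    · rw [hcK]
      have hTl : ((c' + 1 + q : ℕ) : ℝ) * l ≤ δ0 * T := by
        have hl1 : (1:ℝ) ≤ l := by exact_mod_cast hl
        calc ((c' + 1 + q : ℕ) : ℝ) * l ≤ (K1 * δ0) * l := by gcongr
          _ ≤ (K0 * δ0) * (l:ℝ) ^ 2 := by
            have a1 : (K1 : ℝ) ≤ K0 := by rw [hK0]; push_cast; linarith only
            have a2 : (l:ℝ) ≤ (l:ℝ) ^ 2 := by nlinarith only [hl1]
            gcongr
          _ = _ := by simp only [T]; push_cast; ring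
      refine (par_err n l ρ c' C1 q T m hl hρl hnl hq2 hTl rfl).trans ?_
      have hn0 : (0:ℝ) < n := by positivity
      rw [Real.rpow_neg (by norm_num), Real.rpow_neg hn0.le]
      apply inv_anti₀ (Real.rpow_pos_of_pos hn0 _)
      calc (n:ℝ) ^ c ≤ ((2:ℝ) ^ (l:ℝ)) ^ c := by
            apply Real.rpow_le_rpow hn0.le _ (by linarith only [hc])
            rw [Real.rpow_natCast]; exact_mod_cast hnl
        _ = (2:ℝ) ^ ((l:ℝ) * c) := by rw [← Real.rpow_mul (by norm_num)]
        _ ≤ _ := by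
            apply Real.rpow_le_rpow_of_exponent_le (by norm_num)
            rw [mul_comm]; gcongr

end FT

/-- Randomized edge-fault connectivity labels with
`O(log n)`-bit vertex labels and `O(log² n · log(f / log² n))`-bit edge labels
for `f ≥ 2 log² n`, answering each fixed query correctly with probability at
least `1 − n^{−c}`. -/
theorem stmt_14 :
    ∀ c : ℝ, 1 ≤ c → ∃ C : ℝ, ∀ n f : ℕ, 2 ≤ n →
      2 * (Real.logb 2 n) ^ 2 ≤ (f : ℝ) →
      ∃ bV bE : ℕ,
        (bV : ℝ) ≤ C * Real.logb 2 n ∧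
        (bE : ℝ) ≤ C * (Real.logb 2 n) ^ 2 *
                      Real.logb 2 ((f : ℝ) / (Real.logb 2 n) ^ 2) ∧
        ∃ D : (Fin bV → Bool) → (Fin bV → Bool) → Finset (Fin bE → Bool) → Bool,
          ∀ G : SimpleGraph (Fin n),
            ∃ (N : ℕ) (μ : Fin N → ℝ)
              (LV : Fin N → Fin n → Fin bV → Bool)
              (LE : Fin N → Sym2 (Fin n) → Fin bE → Bool),
              (∀ ω, 0 ≤ μ ω) ∧ (∑ ω, μ ω = 1) ∧
              ∀ (s t : Fin n) (F : Finset (Sym2 (Fin n))),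
                (↑F : Set (Sym2 (Fin n))) ⊆ G.edgeSet → F.card ≤ f →
                1 - (n : ℝ) ^ (-c) ≤
                  ∑ ω ∈ Finset.univ.filter (fun ω =>
                      (D (LV ω s) (LV ω t) (F.image (LE ω)) = true ↔
                        (G.deleteEdges (↑F : Set (Sym2 (Fin n)))).Reachable s t)),
                    μ ω := by
  intro c hc
  exact FT.final c hc
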